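/- Let R be a henselian Noetherian local ring whose 𝔪-adic completion is isomorphic to Q/(f₁, …, f_c) for some regular local ring Q and some Q-regular sequence f₁, …, f_c (i.e. R is a henselian local complete intersection), and assume dim R > 0. Let 𝒳 be a resolving subcategory of the category of finitely generated R-modules. Then the following conditions are equivalent: (1) 𝒳 is not contravariantly infinite, i.e. some finitely generated R-module outside 𝒳 admits a right 𝒳-approximation; (2) 𝒳 contains no module M with 0 < pd_R M < ∞; (3) every module in 𝒳 is maximal Cohen–Macaulay. -/

import Mathlib

open CategoryTheory IsLocalRing

universe u

noncomputable section

/-- The `i`-th Ext module of two `R`-modules. -/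
abbrev ExtMod (R : Type u) [CommRing R] (i : ℕ) (M N : ModuleCat.{u} R) : ModuleCat R :=
  ((Ext R (ModuleCat.{u} R) i).obj (Opposite.op M)).obj N

/-- Vanishing of the `i`-th Ext module: `Ext_R^i(M, N) = 0`. -/
def ExtVanish (R : Type u) [CommRing R] (i : ℕ) (M N : ModuleCat.{u} R) : Prop :=
  Subsingleton (ExtMod R i M N)

variable (R : Type u) [CommRing R]

/-- `0 → A → B → C → 0` is a short exact sequence. -/
def IsSES {A B C : ModuleCat.{u} R} (f : A →ₗ[R] B) (g : B →ₗ[R] C) : Prop :=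
  Function.Injective f ∧ Function.Exact f g ∧ Function.Surjective g

/-- A resolving subcategory of the category of finitely generated `R`-modules. -/
structure IsResolving (𝒳 : Set (ModuleCat.{u} R)) : Prop where
  finite : ∀ M ∈ 𝒳, Module.Finite R M
  isoClosed : ∀ {M N : ModuleCat.{u} R}, M ∈ 𝒳 → (↥M ≃ₗ[R] ↥N) → N ∈ 𝒳
  freeMem : ∀ M : ModuleCat.{u} R, Module.Finite R M → Module.Free R M → M ∈ 𝒳
  summandClosed : ∀ M N : ModuleCat.{u} R, ModuleCat.of R (↥M × ↥N) ∈ 𝒳 → M ∈ 𝒳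
  extClosed : ∀ (A B C : ModuleCat.{u} R) (f : A →ₗ[R] B) (g : B →ₗ[R] C),
    IsSES R f g → A ∈ 𝒳 → C ∈ 𝒳 → B ∈ 𝒳
  kerClosed : ∀ (A B C : ModuleCat.{u} R) (f : A →ₗ[R] B) (g : B →ₗ[R] C),
    IsSES R f g → B ∈ 𝒳 → C ∈ 𝒳 → A ∈ 𝒳

/-- `f : X → M` is a right `𝒳`-approximation of `M`. -/
def IsRightApprox (𝒳 : Set (ModuleCat.{u} R)) {X M : ModuleCat.{u} R} (f : X →ₗ[R] M) : Prop :=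
  X ∈ 𝒳 ∧ ∀ W ∈ 𝒳, ∀ g : ↥W →ₗ[R] ↥M, ∃ h : ↥W →ₗ[R] ↥X, f ∘ₗ h = g

/-- `M` admits a right `𝒳`-approximation. -/
def HasRightApprox (𝒳 : Set (ModuleCat.{u} R)) (M : ModuleCat.{u} R) : Prop :=
  ∃ (X : ModuleCat.{u} R) (f : X →ₗ[R] M), IsRightApprox R 𝒳 f

/-- `𝒳` is contravariantly infinite: no finitely generated module outside `𝒳` admits
a right `𝒳`-approximation. -/
def ContravariantlyInfinite (𝒳 : Set (ModuleCat.{u} R)) : Prop :=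
  ∀ M : ModuleCat.{u} R, Module.Finite R M → M ∉ 𝒳 → ¬ HasRightApprox R 𝒳 M

/-- `𝒳` is contravariantly finite: every finitely generated module admits
a right `𝒳`-approximation. -/
def ContravariantlyFinite (𝒳 : Set (ModuleCat.{u} R)) : Prop :=
  ∀ M : ModuleCat.{u} R, Module.Finite R M → HasRightApprox R 𝒳 M

/-- The restricted functor `Hom_R(-, C)|_𝒳` is finitely presented, i.e. `C ∈ 𝒞(𝒳)`. -/
def MemCC (𝒳 : Set (ModuleCat.{u} R)) (C : ModuleCat.{u} R) : Prop :=
  ∃ (X₀ X₁ : ModuleCat.{u} R) (g : ↥X₁ →ₗ[R] ↥X₀) (f : ↥X₀ →ₗ[R] ↥C), X₀ ∈ 𝒳 ∧ X₁ ∈ 𝒳 ∧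
    ∀ W ∈ 𝒳, Function.Surjective (fun h : ↥W →ₗ[R] ↥X₀ => f ∘ₗ h) ∧
      Function.Exact (fun h : ↥W →ₗ[R] ↥X₁ => g ∘ₗ h) (fun h : ↥W →ₗ[R] ↥X₀ => f ∘ₗ h)

/-- `𝒳` is coherent: `𝒞(𝒳) = rap 𝒳`. -/
def Coherent (𝒳 : Set (ModuleCat.{u} R)) : Prop :=
  ∀ M : ModuleCat.{u} R, Module.Finite R M → (MemCC R 𝒳 M ↔ HasRightApprox R 𝒳 M)

/-- The right Ext-orthogonal class `𝒳^⊥` of a class `𝒳` of finitely generated modules. -/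
def XPerp (𝒳 : Set (ModuleCat.{u} R)) : Set (ModuleCat.{u} R) :=
  {Y | Module.Finite R Y ∧ ∀ X ∈ 𝒳, ∀ i, 0 < i → ExtVanish R i X Y}

/-- The projective dimension of `M` is at most `n`. -/
def ProjDimLE (M : ModuleCat.{u} R) (n : ℕ) : Prop :=
  ∀ N : ModuleCat.{u} R, ∀ i, n < i → ExtVanish R i M N

/-- The depth of an `R`-module over a local ring: `inf { i | Ext^i(k, M) ≠ 0 }`. -/
def moduleDepth [IsLocalRing R] (M : ModuleCat.{u} R) : ℕ∞ :=
  sInf ((fun i : ℕ => (i : ℕ∞)) ''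
    {i : ℕ | ¬ ExtVanish R i (ModuleCat.of R (ResidueField R)) M})

/-- `M` is a maximal Cohen–Macaulay `R`-module: `depth M ≥ dim R`. -/
def IsMCM [IsLocalRing R] (M : ModuleCat.{u} R) : Prop :=
  ringKrullDim R ≤ (moduleDepth R M : WithBot ℕ∞)

/-- A Gorenstein local ring: `∃ n, Ext^i(M, R) = 0` for every finitely generated `M`
and every `i > n`. -/
def IsGorensteinLocalRing : Prop :=
  ∃ n : ℕ, ∀ M : ModuleCat.{u} R, Module.Finite R M →
    ∀ i, n < i → ExtVanish R i M (ModuleCat.of R R)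

/-- A regular local ring: Noetherian local with `dim R = dim_k 𝔪/𝔪²`. -/
def IsRegularLocal [IsLocalRing R] : Prop :=
  IsNoetherianRing R ∧
    ringKrullDim R = (Module.finrank (ResidueField R) (CotangentSpace R) : ℕ)

/-- Witness that the local ring `R` is a complete intersection: its `𝔪`-adic completion
is `Q/(f₁, …, f_c)` for a regular local ring `Q` and a `Q`-regular sequence `f₁, …, f_c`. -/
structure CompleteIntersectionWitness [IsLocalRing R] : Type (u + 1) where
  Q : Type u
  [commRing : CommRing Q]
  [localRing : IsLocalRing Q]
  regular : IsRegularLocal Q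
  fs : List Q
  regSeq : RingTheory.Sequence.IsRegular Q fs
  equiv : AdicCompletion (maximalIdeal R) R ≃+* Q ⧸ Ideal.span {x : Q | x ∈ fs}

/-- The local ring `R` is a complete intersection. -/
def IsCompleteIntersection [IsLocalRing R] : Prop :=
  Nonempty (CompleteIntersectionWitness R)

end

/-!
If `𝒳` contains a nonfree module of finite projective dimension, its syzygies yield an exact
sequence `0 → K → F → G → 0` in `𝒳` with `K` and `F` free, `K ≠ 0` and `K ⊆ 𝔪 F`. Let `f : X → M`
be an approximation with kernel `Y`. The pushout of `0 → Kˡ → Fˡ → Gˡ → 0` along a map `Kˡ → X` with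
image `Y` lies in `𝒳` and maps to `M`; factoring this map through `f` gives an endomorphism `φ` of
`X` with `f φ = f` and `φ(Y) ⊆ 𝔪 Y`. By Nakayama `1 - φ` splits off `Y`, so `M` is a direct summand
of `X` and hence lies in `𝒳`.

For the passage from finite projective dimension to depth, let `S` be the completion of `R`, a
quotient of a regular local ring `Q` by a regular sequence. Iterated pullbacks along multiplication
by elements of `𝔪` replace a member of `𝒳` by one that is free on the punctured spectrum and has no
greater depth. Between such modules extensions over `S` descend to `R`, because `Ext¹` is killed by
a power of `𝔪`; thus their base changes form a class over `S` that is closed under extensions and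
contains syzygies. Such a class `C` lifts along `A → A/f` to the class of `f`-regular modules whose
reduction lies in `C`: for `M` in `C` with `A`-syzygy `N`, the module `N/fN` is an extension of an
`A/f`-syzygy of `M` by `M`. This reduces the claim to `Q`, where every module has finite projective
dimension.

Finally, `Ext¹(W, R) = 0` for every maximal Cohen–Macaulay module `W`, so if `𝒳` consists of such
modules, then `R → R/x` is an approximation for every regular `x ∈ 𝔪`, whereas `R/x` is not maximal
Cohen–Macaulay.
-/

/-! ### Ext and projective dimension -/

section ExtVanish

variable {R : Type u} [CommRing R] {M N : ModuleCat.{u} R}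

lemma extVanish_iff_exactAt (P : ProjectiveResolution M) (i : ℕ) :
    ExtVanish R i M N ↔ (P.complex.linearYonedaObj R N).ExactAt i := by
  rw [HomologicalComplex.exactAt_iff_isZero_homology, ← (P.isoExt (R := R) i N).isZero_iff,
    ModuleCat.isZero_iff_subsingleton]
  rfl

lemma extVanish_succ_iff_forall_exists (P : ProjectiveResolution M) (i : ℕ) :
    ExtVanish R (i + 1) M N ↔ ∀ f : P.complex.X (i + 1) ⟶ N, P.complex.d (i + 2) (i + 1) ≫ f = 0 →
      ∃ g : P.complex.X i ⟶ N, P.complex.d (i + 1) i ≫ g = f := by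
  rw [extVanish_iff_exactAt P, HomologicalComplex.exactAt_iff' _ i (i + 1) (i + 2) (by simp)
    (by simp), ShortComplex.moduleCat_exact_iff]
  rfl

lemma extVanish_zero_iff_forall_eq_zero (P : ProjectiveResolution M) :
    ExtVanish R 0 M N ↔ ∀ f : P.complex.X 0 ⟶ N, P.complex.d 1 0 ≫ f = 0 → f = 0 := by
  have hd : (P.complex.linearYonedaObj R N).d 0 0 = 0 :=
    HomologicalComplex.shape _ _ _ (by simp)
  rw [extVanish_iff_exactAt P, HomologicalComplex.exactAt_iff' _ 0 0 1 (by simp) (by simp),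
    ShortComplex.moduleCat_exact_iff]
  refine forall₂_congr fun f _ => ?_
  change (∃ g, (P.complex.linearYonedaObj R N).d 0 0 g = f) ↔ f = 0
  simp only [hd, ModuleCat.hom_zero, LinearMap.zero_apply, exists_const]
  exact eq_comm

lemma extVanish_zero_iff_subsingleton_hom : ExtVanish R 0 M N ↔ Subsingleton (M ⟶ N) := by
  let P := projectiveResolution M
  let π : P.complex.X 0 ⟶ M := P.π.f 0
  have hπ : P.complex.d 1 0 ≫ π = 0 := P.complex_d_comp_π_f_zero
  have hepi : Epi π := inferInstanceAs (Epi (P.π.f 0))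
  have hexact : (ShortComplex.mk _ π hπ).Exact := P.exact₀
  rw [extVanish_zero_iff_forall_eq_zero P]
  refine ⟨fun h => subsingleton_of_forall_eq 0 fun a => ?_, fun _ f hf => ?_⟩
  · rw [← cancel_epi π, Limits.comp_zero]
    exact h _ (by rw [reassoc_of% hπ, Limits.zero_comp])
  · rw [← hexact.g_desc f hf, Subsingleton.elim (hexact.desc f hf) 0, Limits.comp_zero]

lemma extVanish_iff_subsingleton_ext {i : ℕ} :
    ExtVanish R i M N ↔ Subsingleton (Abelian.Ext M N i) := by
  cases i with
  | zero =>
    rw [extVanish_zero_iff_subsingleton_hom, (Abelian.Ext.homEquiv₀ (X := M)).subsingleton_congr]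
  | succ i =>
    let P := projectiveResolution M
    rw [extVanish_succ_iff_forall_exists P]
    refine ⟨fun h => subsingleton_of_forall_eq 0 fun a => ?_, fun _ f hf => ?_⟩
    · obtain ⟨f, hf, rfl⟩ := P.extMk_surjective a (i + 2) rfl
      exact (P.extMk_eq_zero_iff f _ _ hf i rfl).2 (h f hf)
    · exact (P.extMk_eq_zero_iff f (i + 2) rfl hf i rfl).1 (Subsingleton.elim _ _)

lemma projDimLE_iff_hasProjectiveDimensionLE {n : ℕ} :
    ProjDimLE R M n ↔ HasProjectiveDimensionLE M n := by
  simp only [ProjDimLE, extVanish_iff_subsingleton_ext]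
  refine ⟨fun h => (hasProjectiveDimensionLT_iff M (n + 1)).2 fun i hi Y e => ?_,
    fun h N i hi => ?_⟩
  · have := h Y i hi
    exact Subsingleton.elim _ _
  · have : HasProjectiveDimensionLT M (n + 1) := h
    exact HasProjectiveDimensionLT.subsingleton M (n + 1) i hi N

end ExtVanish

section Ext

variable {R : Type u} [CommRing R] {A B C : Type u} [AddCommGroup A] [AddCommGroup B]
  [AddCommGroup C] [Module R A] [Module R B] [Module R C] {f : A →ₗ[R] B} {g : B →ₗ[R] C}

lemma shortExact_of_exact (hf : Function.Injective f) (hfg : Function.Exact f g)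
    (hg : Function.Surjective g) :
    (ModuleCat.shortComplexOfCompEqZero f g hfg.linearMap_comp_eq_zero).ShortExact :=
  ModuleCat.shortComplex_shortExact _ hfg hf hg

lemma hasProjectiveDimensionLE_of_free (M : Type u) [AddCommGroup M] [Module R M] [Module.Free R M]
    (n : ℕ) : HasProjectiveDimensionLE (ModuleCat.of R M) n := by
  have := (IsProjective.iff_projective M).1 (inferInstance : Module.Projective R M)
  exact hasProjectiveDimensionLT_of_ge _ 1 (n + 1) (by lia)

lemma free_of_hasProjectiveDimensionLE_zero [IsLocalRing R] {M : Type u} [AddCommGroup M]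
    [Module R M] [Module.Finite R M] (h : HasProjectiveDimensionLE (ModuleCat.of R M) 0) :
    Module.Free R M := by
  have := (projective_iff_hasProjectiveDimensionLE_zero _).2 h
  have : Module.Projective R M := (IsProjective.iff_projective M).2 this
  exact Module.free_of_flat_of_isLocalRing

lemma hasProjectiveDimensionLE_succ_iff [Module.Projective R B] (hf : Function.Injective f)
    (hfg : Function.Exact f g) (hg : Function.Surjective g) (n : ℕ) :
    HasProjectiveDimensionLE (ModuleCat.of R C) (n + 1) ↔
      HasProjectiveDimensionLE (ModuleCat.of R A) n :=
  (shortExact_of_exact hf hfg hg).hasProjectiveDimensionLT_X₃_iff n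
    ((IsProjective.iff_projective B).1 inferInstance)

lemma exists_comp_eq_of_subsingleton_ext_one (hf : Function.Injective f)
    (hfg : Function.Exact f g) (hg : Function.Surjective g) {N : Type u} [AddCommGroup N]
    [Module R N] (hN : Subsingleton (Abelian.Ext (ModuleCat.of R N) (ModuleCat.of R A) 1))
    (φ : N →ₗ[R] C) : ∃ ψ : N →ₗ[R] B, g ∘ₗ ψ = φ := by
  obtain ⟨e, he⟩ := Abelian.Ext.covariant_sequence_exact₃ _ (shortExact_of_exact hf hfg hg)
    (Abelian.Ext.mk₀ (ModuleCat.ofHom φ)) (zero_add 1) (Subsingleton.elim _ _)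
  obtain ⟨ψ, rfl⟩ := (Abelian.Ext.mk₀_bijective _ _).2 e
  rw [Abelian.Ext.mk₀_comp_mk₀] at he
  exact ⟨ψ.hom, congrArg ModuleCat.Hom.hom ((Abelian.Ext.mk₀_bijective _ _).1 he)⟩

lemma subsingleton_ext_one_iff_forall_exists_comp_eq [Module.Projective R B]
    (hf : Function.Injective f) (hfg : Function.Exact f g) (hg : Function.Surjective g)
    {N : Type u} [AddCommGroup N] [Module R N] :
    Subsingleton (Abelian.Ext (ModuleCat.of R C) (ModuleCat.of R N) 1) ↔
      ∀ φ : A →ₗ[R] N, ∃ ψ : B →ₗ[R] N, ψ ∘ₗ f = φ := by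
  have hS := shortExact_of_exact hf hfg hg
  have := (IsProjective.iff_projective B).1 (inferInstance : Module.Projective R B)
  refine ⟨fun _ φ => ?_, fun h => subsingleton_of_forall_eq 0 fun e => ?_⟩
  · obtain ⟨e, he⟩ := Abelian.Ext.contravariant_sequence_exact₁ hS _
      (Abelian.Ext.mk₀ (ModuleCat.ofHom φ)) (add_zero 1) (Subsingleton.elim _ _)
    obtain ⟨ψ, rfl⟩ := (Abelian.Ext.mk₀_bijective _ _).2 e
    rw [Abelian.Ext.mk₀_comp_mk₀] at he
    exact ⟨ψ.hom, congrArg ModuleCat.Hom.hom ((Abelian.Ext.mk₀_bijective _ _).1 he)⟩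
  · obtain ⟨e, rfl⟩ := Abelian.Ext.contravariant_sequence_exact₃ hS _ e
      (Abelian.Ext.eq_zero_of_projective _) (add_zero 1)
    obtain ⟨φ, rfl⟩ := (Abelian.Ext.mk₀_bijective _ _).2 e
    obtain ⟨ψ, hψ⟩ := h φ.hom
    obtain rfl : ModuleCat.ofHom f ≫ ModuleCat.ofHom ψ = φ := ModuleCat.hom_ext hψ
    rw [← Abelian.Ext.mk₀_comp_mk₀]
    exact hS.extClass_comp_assoc _

end Ext

/-- The pushout `(X × F) / {(h k, - i k)}` of two linear maps `i : K → F` and `h : K → X`. -/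
abbrev ModulePushout {R K F X : Type*} [CommRing R] [AddCommGroup K] [AddCommGroup F]
    [AddCommGroup X] [Module R K] [Module R F] [Module R X] (i : K →ₗ[R] F) (h : K →ₗ[R] X) :=
  (X × F) ⧸ LinearMap.range (h.prod (-i))

namespace ModulePushout

variable {R K F X G M : Type*} [CommRing R] [AddCommGroup K] [AddCommGroup F] [AddCommGroup X]
  [AddCommGroup G] [AddCommGroup M] [Module R K] [Module R F] [Module R X] [Module R G]
  [Module R M] (i : K →ₗ[R] F) (h : K →ₗ[R] X)

/-- The map `X → (X × F) / {(h k, - i k)}` into the pushout. -/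
def inl : X →ₗ[R] ModulePushout i h := Submodule.mkQ _ ∘ₗ LinearMap.inl R X F

/-- The map `F → (X × F) / {(h k, - i k)}` into the pushout. -/
def inr : F →ₗ[R] ModulePushout i h := Submodule.mkQ _ ∘ₗ LinearMap.inr R X F

lemma exists_eq_inl_add_inr (w : ModulePushout i h) : ∃ x y, w = inl i h x + inr i h y := by
  obtain ⟨⟨x, y⟩, rfl⟩ := Submodule.mkQ_surjective _ w
  exact ⟨x, y, by simp only [inl, inr, LinearMap.comp_apply, ← map_add, LinearMap.inl_apply,
    LinearMap.inr_apply, Prod.mk_add_mk, add_zero, zero_add]⟩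

lemma inr_comp_eq_inl_comp : inr i h ∘ₗ i = inl i h ∘ₗ h := by
  ext k
  refine (Submodule.Quotient.eq _).2 ⟨-k, ?_⟩
  simp

variable {i h}

/-- The map out of the pushout given by a commutative square. -/
def desc (a : X →ₗ[R] M) (b : F →ₗ[R] M) (hab : b ∘ₗ i = a ∘ₗ h) : ModulePushout i h →ₗ[R] M :=
  Submodule.liftQ _ (a.coprod b) <| by
    rintro _ ⟨k, rfl⟩
    simpa [← sub_eq_add_neg, sub_eq_zero] using (LinearMap.congr_fun hab k).symm

variable {a : X →ₗ[R] M} {b : F →ₗ[R] M} {hab : b ∘ₗ i = a ∘ₗ h}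

@[simp]
lemma desc_inl (x : X) : desc a b hab (inl i h x) = a x := by simp [desc, inl]

@[simp]
lemma desc_inr (y : F) : desc a b hab (inr i h y) = b y := by simp [desc, inr]

lemma inl_injective (hi : Function.Injective i) : Function.Injective (inl i h) := by
  rw [injective_iff_map_eq_zero]
  intro x hx
  obtain ⟨k, hk⟩ := (Submodule.Quotient.mk_eq_zero _).1 hx
  obtain ⟨hkx, hki⟩ : h k = x ∧ i k = 0 := by simpa using hk
  rw [← hkx, (injective_iff_map_eq_zero i).1 hi k hki, map_zero]

variable {q : F →ₗ[R] G} (hq : q ∘ₗ i = (0 : X →ₗ[R] G) ∘ₗ h)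

lemma exact_inl_desc (hiq : Function.Exact i q) : Function.Exact (inl i h) (desc 0 q hq) := by
  intro w
  refine ⟨fun hw => ?_, ?_⟩
  · obtain ⟨x, y, rfl⟩ := exists_eq_inl_add_inr i h w
    obtain ⟨k, rfl⟩ := (hiq y).1 (by simpa using hw)
    exact ⟨x + h k, by rw [map_add]; congr 1; exact (LinearMap.congr_fun
      (inr_comp_eq_inl_comp i h) k).symm⟩
  · rintro ⟨x, rfl⟩
    simp

lemma desc_surjective (hsurj : Function.Surjective q) : Function.Surjective (desc 0 q hq) :=
  fun z => (hsurj z).imp' (inr i h) fun _ hy => (desc_inr _).trans hy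

end ModulePushout

/-! ### Approximations -/

section MinimalCover

variable {R : Type u} [CommRing R]

open scoped TensorProduct in
lemma exists_surjective_ker_le_maximalIdeal_smul_top [IsLocalRing R] (M : Type*)
    [AddCommGroup M] [Module R M] [Module.Finite R M] :
    ∃ (n : ℕ) (π : (Fin n → R) →ₗ[R] M), Function.Surjective π ∧
      LinearMap.ker π ≤ maximalIdeal R • (⊤ : Submodule R (Fin n → R)) := by
  let b := Module.finBasis (ResidueField R) (ResidueField R ⊗[R] M)
  choose v hv using fun i =>
    TensorProduct.mk_surjective R M (ResidueField R) residue_surjective (b i)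
  refine ⟨_, Fintype.linearCombination R v, ?_, fun z hz => ?_⟩
  · rw [← LinearMap.range_eq_top, Fintype.range_linearCombination]
    exact span_eq_top_of_tmul_eq_basis v b hv
  · have hsum : ∑ i, residue R (z i) • b i = 0 := by
      have hz' : ∑ i, z i • v i = 0 := by simpa [Fintype.linearCombination_apply] using hz
      rw [← map_zero (TensorProduct.mk R (ResidueField R) M 1), ← hz', map_sum]
      refine Finset.sum_congr rfl fun i _ => ?_
      rw [map_smul, hv, ← algebraMap_smul (ResidueField R) (z i) (b i)]
      rfl
    have hz : ∀ i, z i ∈ maximalIdeal R := fun i => (residue_eq_zero_iff _).1 <|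
      Fintype.linearIndependent_iff.1 b.linearIndependent _ hsum i
    rw [pi_eq_sum_univ z]
    exact Submodule.sum_mem _ fun i _ => Submodule.smul_mem_smul (hz i) Submodule.mem_top

lemma compLeft_subtype_mem_smul_top {F : Type*} [AddCommGroup F] [Module R F] {I : Ideal R}
    {K : Submodule R F} (hK : K ≤ I • ⊤) {ι : Type*} [Finite ι] (z : ι → K) :
    K.subtype.compLeft ι z ∈ I • (⊤ : Submodule R (ι → F)) := by
  classical
  have := Fintype.ofFinite ι
  have hz : K.subtype.compLeft ι z = ∑ i, LinearMap.single R (fun _ => F) i (z i : F) :=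
    (LinearMap.sum_single_apply _ _).symm
  rw [hz]
  refine Submodule.sum_mem _ fun i _ => ?_
  have hmap := Submodule.mem_map_of_mem (f := LinearMap.single R (fun _ => F) i) (hK (z i).2)
  rw [Submodule.map_smul''] at hmap
  exact Submodule.smul_mono le_rfl le_top hmap

lemma exists_surjective_pi_of_free (K Y : Type*) [AddCommGroup K] [Module R K] [Module.Free R K]
    [Nontrivial K] [AddCommGroup Y] [Module R Y] [Module.Finite R Y] :
    ∃ (n : ℕ) (h : (Fin n → K) →ₗ[R] Y), Function.Surjective h := by
  obtain ⟨n, p, hp⟩ := Module.Finite.exists_fin' R Y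
  let b := Module.Free.chooseBasis R K
  obtain ⟨i⟩ := b.index_nonempty
  have hb : Function.Surjective (b.coord i) := fun r => ⟨r • b i, by simp⟩
  exact ⟨n, p ∘ₗ (b.coord i).compLeft (Fin n), hp.comp hb.comp_left⟩

/-- By Nakayama `1 - φ` maps `ker f` onto itself, hence splits it off. -/
lemma nonempty_equiv_prod_ker_of_comp_eq [IsLocalRing R] [IsNoetherianRing R] {X M : Type*}
    [AddCommGroup X] [AddCommGroup M] [Module R X] [Module R M] [Module.Finite R X] {f : X →ₗ[R] M}
    (hf : Function.Surjective f) {φ : X →ₗ[R] X} (hφ : f ∘ₗ φ = f)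
    (hker : ∀ y ∈ LinearMap.ker f, φ y ∈ maximalIdeal R • LinearMap.ker f) :
    Nonempty (X ≃ₗ[R] M × LinearMap.ker f) := by
  let δ : X →ₗ[R] LinearMap.ker f := (LinearMap.id - φ).codRestrict _ fun x => by
    simpa [sub_eq_zero] using (LinearMap.congr_fun hφ x).symm
  let u := δ ∘ₗ (LinearMap.ker f).subtype
  have hle : LinearMap.ker f ≤ (LinearMap.ker f).map (LinearMap.id - φ) := by
    refine Submodule.le_of_le_smul_of_le_jacobson_bot (IsNoetherian.noetherian _)
      (maximalIdeal_le_jacobson _) fun y hy => ?_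
    refine Submodule.mem_sup.2 ⟨y - φ y, Submodule.mem_map.2 ⟨y, hy, rfl⟩, φ y, hker y hy, ?_⟩
    exact sub_add_cancel y (φ y)
  have hu : Function.Surjective u := fun y => by
    obtain ⟨x, hx, hxy⟩ := hle y.2
    exact ⟨⟨x, hx⟩, Subtype.ext hxy⟩
  let e := LinearEquiv.ofBijective u ⟨OrzechProperty.injective_of_surjective_endomorphism u hu, hu⟩
  let r : X →ₗ[R] LinearMap.ker f := e.symm.toLinearMap ∘ₗ δ
  have hr : ∀ y : LinearMap.ker f, r y = y := e.symm_apply_apply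
  exact ⟨LinearMap.equivProdOfSurjectiveOfIsCompl f r (LinearMap.range_eq_top.2 hf)
    (LinearMap.range_eq_of_proj hr) (LinearMap.isCompl_of_proj hr)⟩

end MinimalCover

section Resolving

variable {R : Type u} [CommRing R] {𝒳 : Set (ModuleCat.{u} R)} {A B C : Type u} [AddCommGroup A]
  [AddCommGroup B] [AddCommGroup C] [Module R A] [Module R B] [Module R C]

namespace IsResolving

lemma mem_of_free (h𝒳 : IsResolving R 𝒳) (F : Type u) [AddCommGroup F] [Module R F]
    [Module.Finite R F] [Module.Free R F] : ModuleCat.of R F ∈ 𝒳 :=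
  h𝒳.freeMem (ModuleCat.of R F) ‹_› ‹_›

lemma mem_of_exact (h𝒳 : IsResolving R 𝒳) {f : A →ₗ[R] B} {g : B →ₗ[R] C}
    (hf : Function.Injective f) (hfg : Function.Exact f g) (hg : Function.Surjective g)
    (hA : ModuleCat.of R A ∈ 𝒳) (hC : ModuleCat.of R C ∈ 𝒳) : ModuleCat.of R B ∈ 𝒳 :=
  h𝒳.extClosed _ _ _ f g ⟨hf, hfg, hg⟩ hA hC

lemma ker_mem (h𝒳 : IsResolving R 𝒳) {g : B →ₗ[R] C} (hg : Function.Surjective g)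
    (hB : ModuleCat.of R B ∈ 𝒳) (hC : ModuleCat.of R C ∈ 𝒳) :
    ModuleCat.of R (LinearMap.ker g) ∈ 𝒳 :=
  h𝒳.kerClosed (ModuleCat.of R (LinearMap.ker g)) _ _ (LinearMap.ker g).subtype g
    ⟨Subtype.val_injective, LinearMap.exact_subtype_ker_map g, hg⟩ hB hC

lemma prod_mem (h𝒳 : IsResolving R 𝒳) (hA : ModuleCat.of R A ∈ 𝒳) (hC : ModuleCat.of R C ∈ 𝒳) :
    ModuleCat.of R (A × C) ∈ 𝒳 :=
  h𝒳.mem_of_exact LinearMap.inl_injective Function.Exact.inl_snd LinearMap.snd_surjective hA hC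

lemma pi_mem (h𝒳 : IsResolving R 𝒳) (hA : ModuleCat.of R A ∈ 𝒳) (n : ℕ) :
    ModuleCat.of R (Fin n → A) ∈ 𝒳 := by
  induction n with
  | zero => exact h𝒳.mem_of_free (Fin 0 → A)
  | succ n ih => exact h𝒳.isoClosed (h𝒳.prod_mem hA ih) (Fin.consLinearEquiv R fun _ => A)

lemma exists_free_ker_of_hasProjectiveDimensionLE [IsLocalRing R]
    (h𝒳 : IsResolving R 𝒳) {G : Type u} [AddCommGroup G] [Module R G]
    (hG : ModuleCat.of R G ∈ 𝒳) {n : ℕ} (hn : HasProjectiveDimensionLE (ModuleCat.of R G) n)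
    (hfree : ¬ Module.Free R G) :
    ∃ (G' : Type u) (_ : AddCommGroup G') (_ : Module R G') (k : ℕ) (π : (Fin k → R) →ₗ[R] G'),
      ModuleCat.of R G' ∈ 𝒳 ∧ Function.Surjective π ∧ LinearMap.ker π ≤ maximalIdeal R • ⊤ ∧
      Module.Free R (LinearMap.ker π) ∧ Nontrivial (LinearMap.ker π) := by
  induction n generalizing G with
  | zero =>
    have : Module.Finite R G := h𝒳.finite _ hG
    exact absurd (free_of_hasProjectiveDimensionLE_zero hn) hfree
  | succ n ih =>
    have : Module.Finite R G := h𝒳.finite _ hG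
    obtain ⟨k, π, hπ, hmin⟩ := exists_surjective_ker_le_maximalIdeal_smul_top (R := R) G
    by_cases hK : Module.Free R (LinearMap.ker π)
    · refine ⟨G, inferInstance, inferInstance, k, π, hG, hπ, hmin, hK, ?_⟩
      by_contra hnt
      rw [not_nontrivial_iff_subsingleton, Submodule.subsingleton_iff_eq_bot,
        LinearMap.ker_eq_bot] at hnt
      exact hfree (Module.Free.of_equiv (LinearEquiv.ofBijective π ⟨hnt, hπ⟩))
    · exact ih (h𝒳.ker_mem hπ (h𝒳.mem_of_free _) hG)
        ((hasProjectiveDimensionLE_succ_iff Subtype.val_injective π.exact_subtype_ker_map hπ n).1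
          hn) hK

end IsResolving

namespace IsRightApprox

variable {X M : ModuleCat.{u} R} {f : X →ₗ[R] M}

lemma surjective (hf : IsRightApprox R 𝒳 f) (h𝒳 : IsResolving R 𝒳) : Function.Surjective f := by
  intro m
  obtain ⟨g, hg⟩ := hf.2 _ (h𝒳.mem_of_free R) (LinearMap.toSpanSingleton R M m)
  exact ⟨g (1 : R), (LinearMap.congr_fun hg (1 : R)).trans (one_smul R m)⟩

lemma exists_comp_eq_comp (hf : IsRightApprox R 𝒳 f) (h𝒳 : IsResolving R 𝒳) {i : A →ₗ[R] B}
    {q : B →ₗ[R] C} (hi : Function.Injective i) (hiq : Function.Exact i q)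
    (hq : Function.Surjective q) (hC : ModuleCat.of R C ∈ 𝒳) (h : A →ₗ[R] X) (hfh : f ∘ₗ h = 0) :
    ∃ (φ : X →ₗ[R] X) (ψ : B →ₗ[R] X), f ∘ₗ φ = f ∧ f ∘ₗ ψ = 0 ∧ φ ∘ₗ h = ψ ∘ₗ i := by
  have hP : ModuleCat.of R (ModulePushout i h) ∈ 𝒳 :=
    h𝒳.mem_of_exact (ModulePushout.inl_injective hi)
      (ModulePushout.exact_inl_desc (by simp [hiq.linearMap_comp_eq_zero]) hiq)
      (ModulePushout.desc_surjective _ hq) hf.1 hC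
  obtain ⟨g, hg⟩ := hf.2 _ hP (ModulePushout.desc f 0 (by simp [hfh]))
  refine ⟨g ∘ₗ ModulePushout.inl i h, g ∘ₗ ModulePushout.inr i h, ?_, ?_, ?_⟩
  · ext x
    exact (LinearMap.congr_fun hg _).trans (ModulePushout.desc_inl x)
  · ext y
    exact (LinearMap.congr_fun hg _).trans (ModulePushout.desc_inr y)
  · rw [LinearMap.comp_assoc, LinearMap.comp_assoc, ModulePushout.inr_comp_eq_inl_comp]

end IsRightApprox

lemma IsResolving.not_exists_projDimLE_iff [IsLocalRing R] (h𝒳 : IsResolving R 𝒳) :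
    (¬ ∃ M ∈ 𝒳, (∃ n : ℕ, ProjDimLE R M n) ∧ ¬ ProjDimLE R M 0) ↔
      ∀ M ∈ 𝒳, ∀ m, HasProjectiveDimensionLE M m → Module.Free R M := by
  simp only [projDimLE_iff_hasProjectiveDimensionLE, not_exists, not_and, not_not,
    forall_exists_index]
  refine forall₂_congr fun M hM => forall₂_congr fun m _ => ?_
  have := h𝒳.finite M hM
  exact ⟨free_of_hasProjectiveDimensionLE_zero, fun _ => hasProjectiveDimensionLE_of_free M 0⟩

open scoped Pointwise in
lemma IsResolving.not_contravariantlyInfinite (h𝒳 : IsResolving R 𝒳) {x : R}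
    (hx : IsSMulRegular R x) (hxmem : ModuleCat.of R (QuotSMulTop x R) ∉ 𝒳)
    (hext : ∀ W ∈ 𝒳, Subsingleton (Abelian.Ext W (ModuleCat.of R R) 1)) :
    ¬ ContravariantlyInfinite R 𝒳 :=
  fun hinf => hinf (.of R (QuotSMulTop x R)) (inferInstanceAs (Module.Finite R (QuotSMulTop x R)))
    hxmem ⟨.of R R, (x • (⊤ : Submodule R R)).mkQ, h𝒳.mem_of_free R, fun W hW φ =>
      exists_comp_eq_of_subsingleton_ext_one (f := LinearMap.lsmul R R x) hx
        (LinearMap.exact_lsmul_mkQ_smul_top R x) (Submodule.mkQ_surjective _) (hext W hW) φ⟩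

lemma IsResolving.contravariantlyInfinite_of_hasProjectiveDimensionLE [IsNoetherianRing R]
    [IsLocalRing R] (h𝒳 : IsResolving R 𝒳) {G : Type u} [AddCommGroup G] [Module R G]
    (hG : ModuleCat.of R G ∈ 𝒳) {n : ℕ} (hn : HasProjectiveDimensionLE (ModuleCat.of R G) n)
    (hfree : ¬ Module.Free R G) : ContravariantlyInfinite R 𝒳 := by
  obtain ⟨G', _, _, k, π, hG', hπ, hmin, _, _⟩ :=
    h𝒳.exists_free_ker_of_hasProjectiveDimensionLE hG hn hfree
  rintro M - hM ⟨X, f, hf⟩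
  have : Module.Finite R X := h𝒳.finite _ hf.1
  obtain ⟨l, h, hh⟩ := exists_surjective_pi_of_free (R := R) (LinearMap.ker π) (LinearMap.ker f)
  let i := (LinearMap.ker π).subtype.compLeft (Fin l)
  have hiq : Function.Exact i (π.compLeft (Fin l)) := fun z => by
    refine ⟨fun hz => ⟨fun j => ⟨z j, congrFun hz j⟩, rfl⟩, ?_⟩
    rintro ⟨w, rfl⟩
    exact funext fun j => (w j).2
  obtain ⟨φ, ψ, hφ, hψ, hφψ⟩ := hf.exists_comp_eq_comp h𝒳
    (Subtype.val_injective.comp_left : Function.Injective i) hiq hπ.comp_left (h𝒳.pi_mem hG' l)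
    ((LinearMap.ker f).subtype ∘ₗ h) (by ext; simp)
  have hker : ∀ y ∈ LinearMap.ker f, φ y ∈ maximalIdeal R • LinearMap.ker f := by
    intro y hy
    obtain ⟨z, hz⟩ := hh ⟨y, hy⟩
    have hφy : φ y = ψ (i z) := by simpa [hz] using LinearMap.congr_fun hφψ z
    rw [hφy]
    have hmap := Submodule.mem_map_of_mem (f := ψ) (compLeft_subtype_mem_smul_top hmin z)
    rw [Submodule.map_smul'', Submodule.map_top] at hmap
    exact Submodule.smul_mono le_rfl (LinearMap.range_le_ker_iff.2 hψ) hmap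
  obtain ⟨e⟩ := nonempty_equiv_prod_ker_of_comp_eq (hf.surjective h𝒳) hφ hker
  exact hM (h𝒳.summandClosed M (ModuleCat.of R (LinearMap.ker f)) (h𝒳.isoClosed hf.1 e))

end Resolving

/-! ### Depth -/

section Depth

open scoped Pointwise

/-- The local form of `depth M ≥ n`: some weakly `M`-regular sequence of length `n` lies in the
maximal ideal. The zero module has depth at least every `n`. -/
def DepthGE (R : Type*) [CommRing R] [IsLocalRing R] (n : ℕ) (M : Type*) [AddCommGroup M]
    [Module R M] : Prop :=
  ∃ rs : List R, rs.length = n ∧ (∀ r ∈ rs, r ∈ maximalIdeal R) ∧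
    RingTheory.Sequence.IsWeaklyRegular M rs

namespace DepthGE

section Basic

variable {R M N : Type*} [CommRing R] [IsLocalRing R] [AddCommGroup M] [Module R M]
  [AddCommGroup N] [Module R N] {n m : ℕ}

lemma zero : DepthGE R 0 M := ⟨[], rfl, by simp, by simp⟩

lemma of_linearEquiv (h : DepthGE R n M) (e : M ≃ₗ[R] N) : DepthGE R n N :=
  h.imp fun _ ⟨hlen, hmem, hreg⟩ => ⟨hlen, hmem, (e.isWeaklyRegular_congr _).1 hreg⟩

lemma succ_iff : DepthGE R (n + 1) M ↔
    ∃ x ∈ maximalIdeal R, IsSMulRegular M x ∧ DepthGE R n (QuotSMulTop x M) := by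
  constructor
  · rintro ⟨_ | ⟨x, rs⟩, hlen, hmem, hreg⟩
    · simp at hlen
    · rw [RingTheory.Sequence.isWeaklyRegular_cons_iff] at hreg
      rw [List.forall_mem_cons] at hmem
      exact ⟨x, hmem.1, hreg.1, rs, Nat.succ_injective hlen, hmem.2, hreg.2⟩
  · rintro ⟨x, hx, hxreg, rs, hlen, hmem, hreg⟩
    exact ⟨x :: rs, congrArg Nat.succ hlen, List.forall_mem_cons.2 ⟨hx, hmem⟩, hreg.cons hxreg⟩

lemma mono (h : DepthGE R n M) (hm : m ≤ n) : DepthGE R m M := by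
  obtain ⟨rs, hlen, hmem, hreg⟩ := h
  refine ⟨rs.take m, by simp [hlen, hm], fun r hr => hmem r (List.mem_of_mem_take hr), ?_⟩
  rw [← List.take_append_drop m rs, RingTheory.Sequence.isWeaklyRegular_append_iff] at hreg
  exact hreg.1

lemma of_subsingleton [Subsingleton M] : DepthGE R n M := by
  refine ⟨List.replicate n 0, List.length_replicate, fun r hr => ?_, ?_⟩
  · rw [List.eq_of_mem_replicate hr]
    exact zero_mem _
  · exact ⟨fun i hi => fun _ _ _ => Subsingleton.elim _ _⟩

lemma natCast_le_ringKrullDim [IsNoetherianRing R] (h : DepthGE R n R) :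
    (n : WithBot ℕ∞) ≤ ringKrullDim R := by
  obtain ⟨rs, rfl, hmem, hreg⟩ := h
  have hreg := RingTheory.Sequence.IsRegular.of_isWeaklyRegular_of_mem_maximalIdeal R hmem hreg
  have : Nontrivial (R ⧸ Ideal.ofList rs) :=
    Ideal.Quotient.nontrivial_iff.2 fun h => hreg.2 (by simp [h])
  rw [← ringKrullDim_add_length_eq_ringKrullDim_of_isRegular rs hreg]
  exact le_add_of_nonneg_left ringKrullDim_nonneg_of_nontrivial

lemma iff_of_surjective {A B M : Type*} [CommRing A] [IsLocalRing A] [CommRing B] [IsLocalRing B]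
    [Algebra A B] [AddCommGroup M] [Module A M] [Module B M] [IsScalarTower A B M]
    (h : Function.Surjective (algebraMap A B)) : DepthGE A n M ↔ DepthGE B n M := by
  have : IsLocalHom (algebraMap A B) := .of_surjective _ h
  have hmem (a : A) : algebraMap A B a ∈ maximalIdeal B ↔ a ∈ maximalIdeal A := by
    rw [mem_maximalIdeal, mem_maximalIdeal, map_mem_nonunits_iff]
  constructor
  · rintro ⟨rs, hlen, hrs, hreg⟩
    exact ⟨rs.map (algebraMap A B), by simpa using hlen, by simpa [hmem] using hrs,
      (RingTheory.Sequence.isWeaklyRegular_map_algebraMap_iff B M rs).2 hreg⟩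
  · rintro ⟨rs, hlen, hrs, hreg⟩
    obtain ⟨rs, rfl⟩ := List.map_surjective_iff.2 h rs
    exact ⟨rs, by simpa using hlen, by simpa [hmem] using hrs,
      (RingTheory.Sequence.isWeaklyRegular_map_algebraMap_iff B M rs).1 hreg⟩

end Basic

section Rees

variable {R : Type u} [CommRing R] [IsLocalRing R] [IsNoetherianRing R] {M N F L : Type u}
  [AddCommGroup M] [Module R M] [Module.Finite R M] [AddCommGroup N] [AddCommGroup F]
  [AddCommGroup L] [Module R N] [Module R F] [Module R L] [Module.Finite R N] [Module.Finite R F]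
  [Module.Finite R L] {n : ℕ}

lemma iff_subsingleton_ext : DepthGE R n M ↔ ∀ i < n, Subsingleton
    (Abelian.Ext (ModuleCat.of R (ResidueField R)) (ModuleCat.of R M) i) := by
  rcases subsingleton_or_nontrivial M with hM | hM
  · refine ⟨fun _ i _ => subsingleton_of_forall_eq 0 fun e => ?_, fun _ => of_subsingleton⟩
    rw [← e.comp_mk₀_id, (ModuleCat.isZero_of_subsingleton (ModuleCat.of R M)).eq_of_src (𝟙 _) 0,
      Abelian.Ext.mk₀_zero, Abelian.Ext.comp_zero]
  · have hlt : maximalIdeal R • (⊤ : Submodule R M) < ⊤ :=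
      lt_top_iff_ne_top.2 (Submodule.top_ne_ideal_smul_of_le_jacobson_annihilator
        (maximalIdeal_le_jacobson _)).symm
    have hsupp : Module.support R (ResidueField R) =
        PrimeSpectrum.zeroLocus (maximalIdeal R : Set R) := by
      rw [Module.support_eq_zeroLocus]
      exact congrArg _ (congrArg _ Ideal.annihilator_quotient)
    constructor
    · rintro ⟨rs, rfl, hmem, hreg⟩
      exact ModuleCat.subsingleton_ext_of_exists_isRegular _ (.of R (ResidueField R)) hsupp.le
        (.of R M) hlt rs hmem (.of_isWeaklyRegular_of_mem_maximalIdeal M hmem hreg)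
    · intro h
      obtain ⟨rs, hlen, hmem, hreg⟩ := ModuleCat.exists_isRegular_of_exists_subsingleton_ext _ n
        (.of R M) hlt (.of R (ResidueField R)) hsupp h
      exact ⟨rs, hlen, hmem, hreg.1⟩

section ShortExact

variable {f : N →ₗ[R] F} {g : F →ₗ[R] L} (hf : Function.Injective f) (hfg : Function.Exact f g)
  (hg : Function.Surjective g)
include hf hfg hg

lemma left_of_exact (hL : DepthGE R n L) (hF : DepthGE R (n + 1) F) : DepthGE R (n + 1) N := by
  rw [iff_subsingleton_ext] at *
  have hS := shortExact_of_exact hf hfg hg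
  refine fun i hi => subsingleton_of_forall_eq 0 fun e => ?_
  have he : e.comp (Abelian.Ext.mk₀ (ModuleCat.ofHom f)) (add_zero i) = 0 :=
    (hF i hi).elim _ _
  cases i with
  | zero =>
    have := hS.mono_f
    exact Abelian.Ext.postcomp_mk₀_injective_of_mono _ (ModuleCat.ofHom f) (by simpa using he)
  | succ i =>
    obtain ⟨x, rfl⟩ := Abelian.Ext.covariant_sequence_exact₁ _ hS e he rfl
    rw [(hL i (by lia)).elim x 0, Abelian.Ext.zero_comp]

lemma right_of_exact (hN : DepthGE R (n + 1) N) (hF : DepthGE R n F) : DepthGE R n L := by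
  rw [iff_subsingleton_ext] at *
  refine fun i hi => subsingleton_of_forall_eq 0 fun e => ?_
  obtain ⟨x, rfl⟩ := Abelian.Ext.covariant_sequence_exact₃ _ (shortExact_of_exact hf hfg hg) e rfl
    ((hN (i + 1) (by lia)).elim _ _)
  rw [(hF i hi).elim x 0, Abelian.Ext.zero_comp]

lemma middle_of_exact (hN : DepthGE R n N) (hL : DepthGE R n L) : DepthGE R n F := by
  rw [iff_subsingleton_ext] at *
  refine fun i hi => subsingleton_of_forall_eq 0 fun e => ?_
  obtain ⟨x, rfl⟩ := Abelian.Ext.covariant_sequence_exact₂ _ (shortExact_of_exact hf hfg hg) e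
    ((hL i hi).elim _ _)
  rw [(hN i hi).elim x 0, Abelian.Ext.zero_comp]

end ShortExact

lemma quotSMulTop_iff {x : R} (hx : x ∈ maximalIdeal R) (hreg : IsSMulRegular M x) :
    DepthGE R n (QuotSMulTop x M) ↔ DepthGE R (n + 1) M := by
  refine ⟨fun h => succ_iff.2 ⟨x, hx, hreg, h⟩, fun h => ?_⟩
  exact right_of_exact (f := LinearMap.lsmul R M x) hreg (LinearMap.exact_lsmul_mkQ_smul_top M x)
    (Submodule.mkQ_surjective _) h (h.mono n.le_succ)

lemma pi (h : DepthGE R n M) (k : ℕ) : DepthGE R n (Fin k → M) := by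
  induction k with
  | zero => exact of_subsingleton
  | succ k ih =>
    exact (middle_of_exact LinearMap.inl_injective Function.Exact.inl_snd
      LinearMap.snd_surjective h ih).of_linearEquiv (Fin.consLinearEquiv R fun _ => M)

end Rees

section BaseChange

open scoped TensorProduct

variable {R S M : Type*} [CommRing R] [IsLocalRing R] [CommRing S] [IsLocalRing S] [Algebra R S]
  [Module.Flat R S] [IsLocalHom (algebraMap R S)] [AddCommGroup M] [Module R M] {n : ℕ}

lemma baseChange (h : DepthGE R n M) : DepthGE S n (S ⊗[R] M) := by
  obtain ⟨rs, hlen, hmem, hreg⟩ := h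
  refine ⟨rs.map (algebraMap R S), by simpa using hlen, ?_,
    hreg.of_flat_of_isBaseChange (TensorProduct.isBaseChange R M S)⟩
  simpa only [List.forall_mem_map] using fun r hr => map_nonunit (algebraMap R S) r (hmem r hr)

end BaseChange

section Descent

open scoped TensorProduct

variable {R S M : Type u} [CommRing R] [IsLocalRing R] [CommRing S] [IsLocalRing S] [Algebra R S]
  [Module.Flat R S] [IsLocalHom (algebraMap R S)] [AddCommGroup M] [Module R M] {n : ℕ}
  [IsNoetherianRing R] [Module.Finite R M]

lemma exists_ne_zero_forall_smul_eq_zero (h : ∀ x ∈ maximalIdeal R, ¬ IsSMulRegular M x) :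
    ∃ m : M, m ≠ 0 ∧ ∀ r ∈ maximalIdeal R, r • m = 0 := by
  have hann : Module.annihilator R (ResidueField R) = maximalIdeal R := Ideal.annihilator_quotient
  have hnt : Nontrivial (ResidueField R →ₗ[R] M) := by
    rw [← not_subsingleton_iff_nontrivial, IsSMulRegular.subsingleton_linearMap_iff, hann]
    exact fun ⟨x, hx, hreg⟩ => h x hx hreg
  obtain ⟨g, hg⟩ := exists_ne (0 : ResidueField R →ₗ[R] M)
  obtain ⟨a, ha⟩ := DFunLike.ne_iff.1 hg
  refine ⟨g a, ha, fun r hr => ?_⟩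
  rw [← map_smul, Module.mem_annihilator.1 (hann.ge hr) a, map_zero]

lemma exists_isSMulRegular_of_baseChange
    (hmap : (maximalIdeal R).map (algebraMap R S) = maximalIdeal S) {y : S}
    (hy : y ∈ maximalIdeal S) (hreg : IsSMulRegular (S ⊗[R] M) y) :
    ∃ x ∈ maximalIdeal R, IsSMulRegular M x := by
  by_contra! h
  obtain ⟨m, hm, hkill⟩ := exists_ne_zero_forall_smul_eq_zero h
  have hle : maximalIdeal S ≤ Ideal.torsionOf S (S ⊗[R] M) (1 ⊗ₜ m) := by
    rw [← hmap, Ideal.map_le_iff_le_comap]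
    intro r hr
    rw [Ideal.mem_comap, Ideal.mem_torsionOf_iff, algebraMap_smul, ← TensorProduct.tmul_smul,
      hkill r hr, TensorProduct.tmul_zero]
  have : Module.FaithfullyFlat R S := .of_flat_of_isLocalHom
  refine hm (Module.FaithfullyFlat.tensorProduct_mk_injective (A := R) (B := S) M (hreg ?_))
  simpa using (Ideal.mem_torsionOf_iff _ _).1 (hle hy)

lemma of_baseChange [IsNoetherianRing S]
    (hmap : (maximalIdeal R).map (algebraMap R S) = maximalIdeal S)
    (h : DepthGE S n (S ⊗[R] M)) : DepthGE R n M := by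
  induction n generalizing M with
  | zero => exact zero
  | succ n ih =>
    obtain ⟨y, hy, hyreg, -⟩ := succ_iff.1 h
    obtain ⟨x, hx, hreg⟩ := exists_isSMulRegular_of_baseChange hmap hy hyreg
    refine succ_iff.2 ⟨x, hx, hreg, ih ?_⟩
    exact ((quotSMulTop_iff (map_nonunit (algebraMap R S) x hx)
      (hreg.of_flat_of_isBaseChange (TensorProduct.isBaseChange R M S))).2 h).of_linearEquiv
      (QuotSMulTop.algebraMapTensorEquivTensorQuotSMulTop x M S)

end Descent

end DepthGE

lemma natCast_le_moduleDepth_iff {R : Type u} [CommRing R] [IsLocalRing R] [IsNoetherianRing R]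
    {M : ModuleCat.{u} R} [Module.Finite R M] {n : ℕ} :
    (n : ℕ∞) ≤ moduleDepth R M ↔ DepthGE R n M := by
  simp only [DepthGE.iff_subsingleton_ext, moduleDepth, le_sInf_iff, Set.forall_mem_image,
    Set.mem_ofPred_eq, extVanish_iff_subsingleton_ext, Nat.cast_le]
  exact forall_congr' fun i => by rw [← not_lt, not_imp_not]

lemma isMCM_iff_depthGE {R : Type u} [CommRing R] [IsLocalRing R] [IsNoetherianRing R]
    {M : ModuleCat.{u} R} [Module.Finite R M] {n : ℕ} (hn : ringKrullDim R = n) :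
    IsMCM R M ↔ DepthGE R n M := by
  rw [IsMCM, hn, ← natCast_le_moduleDepth_iff]
  exact WithBot.coe_le_coe

end Depth

section RegularLocalRing

open scoped Pointwise

lemma isLocalRing_quotient_span_singleton {R : Type*} [CommRing R] [IsLocalRing R] {x : R}
    (hx : x ∈ maximalIdeal R) : IsLocalRing (R ⧸ Ideal.span {x}) := by
  have : Nontrivial (R ⧸ Ideal.span {x}) :=
    Ideal.Quotient.nontrivial_iff.2 (mt Ideal.span_singleton_eq_top.1 hx)
  exact .of_surjective' (Ideal.Quotient.mk _) Ideal.Quotient.mk_surjective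

lemma nonempty_quotient_span_singleton_equiv_quotSMulTop {R : Type*} [CommRing R] (x : R) :
    Nonempty ((R ⧸ Ideal.span {x}) ≃ₗ[R] QuotSMulTop x R) :=
  ⟨Submodule.quotEquivOfEq _ _ (by simp [← Submodule.ideal_span_singleton_smul])⟩

lemma exists_ringKrullDim_eq_natCast (R : Type*) [CommRing R] [FiniteRingKrullDim R] :
    ∃ n : ℕ, ringKrullDim R = n := by
  obtain ⟨d, hd⟩ := WithBot.ne_bot_iff_exists.1 (ringKrullDim_ne_bot (R := R))
  lift d to ℕ using fun h => ringKrullDim_ne_top (R := R) (by rw [← hd, h]; rfl)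
  exact ⟨d, hd.symm⟩

section Avoidance

variable {R : Type*} [CommRing R] [IsLocalRing R] [IsNoetherianRing R]

lemma not_maximalIdeal_le_sq (h : ringKrullDim R ≠ 0) : ¬ maximalIdeal R ≤ maximalIdeal R ^ 2 := by
  intro hle
  refine h (ringKrullDim_eq_zero_of_isField (isField_iff_maximalIdeal_eq.2 ?_))
  refine Submodule.eq_bot_of_le_smul_of_le_jacobson_bot (maximalIdeal R) _
    (IsNoetherian.noetherian _) ?_ (maximalIdeal_le_jacobson _)
  rwa [smul_eq_mul, ← pow_two]

lemma exists_mem_maximalIdeal_notMem_sq (h : ringKrullDim R ≠ 0) {s : Set (Ideal R)}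
    (hs : s.Finite) (hprime : ∀ p ∈ s, p.IsPrime) (hne : ∀ p ∈ s, ¬ maximalIdeal R ≤ p) :
    ∃ x ∈ maximalIdeal R, x ∉ maximalIdeal R ^ 2 ∧ ∀ p ∈ s, x ∉ p := by
  have hcover := Ideal.subset_union_prime_finite (hs.insert (maximalIdeal R ^ 2)) (f := id)
    (maximalIdeal R ^ 2) (maximalIdeal R ^ 2)
    (fun p hp hp2 _ => hprime p (hp.resolve_left hp2)) (I := maximalIdeal R)
  have hnot : ¬ ∃ p ∈ insert (maximalIdeal R ^ 2) s, maximalIdeal R ≤ id p := by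
    rintro ⟨p, rfl | hp, hle⟩
    exacts [not_maximalIdeal_le_sq h hle, hne p hp hle]
  obtain ⟨x, hx, hxU⟩ := Set.not_subset.1 (mt hcover.1 hnot)
  simp only [Set.mem_iUnion₂, not_exists, Set.forall_mem_insert] at hxU
  exact ⟨x, hx, hxU⟩

end Avoidance

section Quotient

variable {Q : Type*} [CommRing Q]

lemma exists_maximalIdeal_le_span_insert_erase [IsLocalRing Q] [DecidableEq Q] {s : Finset Q}
    (hs : Ideal.span (s : Set Q) = maximalIdeal Q) {x : Q} (hx : x ∈ maximalIdeal Q)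
    (hx2 : x ∉ maximalIdeal Q ^ 2) :
    ∃ y ∈ s, maximalIdeal Q ≤ Ideal.span (insert x (s.erase y : Set Q)) := by
  obtain ⟨c, -, hc⟩ := Submodule.mem_span_finset.1 (hs.ge hx)
  obtain ⟨y, hy, hcy⟩ : ∃ y ∈ s, IsUnit (c y) := by
    by_contra! hcon
    rw [← hc, pow_two] at hx2
    exact hx2 (Ideal.sum_mem _ fun a ha =>
      Ideal.mul_mem_mul (hcon a ha) (hs.le (Ideal.subset_span ha)))
  refine ⟨y, hy, ?_⟩
  have hsub : (s.erase y : Set Q) ⊆ Ideal.span (insert x (s.erase y : Set Q)) :=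
    (Set.subset_insert _ _).trans Ideal.subset_span
  rw [← hs, Ideal.span_le]
  intro z hz
  rcases eq_or_ne z y with rfl | hzy
  · refine (Ideal.unit_mul_mem_iff_mem _ hcy).1 ?_
    rw [← smul_eq_mul, ← add_sub_cancel_right (c z • z) (∑ a ∈ s.erase z, c a • a),
      Finset.add_sum_erase s (fun a => c a • a) hy, hc]
    exact sub_mem (Ideal.subset_span (Set.mem_insert _ _))
      (Ideal.sum_mem _ fun a ha => Ideal.mul_mem_left _ _ (hsub ha))
  · exact hsub (Finset.mem_erase.2 ⟨hzy, hz⟩)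

lemma spanFinrank_maximalIdeal_quotient_span_singleton_lt [IsLocalRing Q] [IsNoetherianRing Q]
    {x : Q} (hx : x ∈ maximalIdeal Q) (hx2 : x ∉ maximalIdeal Q ^ 2)
    [IsLocalRing (Q ⧸ Ideal.span {x})] :
    (maximalIdeal (Q ⧸ Ideal.span {x})).spanFinrank < (maximalIdeal Q).spanFinrank := by
  classical
  obtain ⟨s, hcard, hs⟩ := Submodule.FG.exists_span_finset_card_eq_spanFinrank
    (IsNoetherian.noetherian (maximalIdeal Q))
  obtain ⟨y, hy, hle⟩ := exists_maximalIdeal_le_span_insert_erase hs hx hx2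
  have hspan : maximalIdeal (Q ⧸ Ideal.span {x}) =
      Ideal.span ((s.erase y).image (Ideal.Quotient.mk (Ideal.span {x})) : Set _) := by
    rw [← map_maximalIdeal_of_surjective (Ideal.Quotient.mk (Ideal.span {x}))
      Ideal.Quotient.mk_surjective, Finset.coe_image, ← Ideal.map_span]
    refine le_antisymm ((Ideal.map_mono hle).trans ?_) (Ideal.map_mono ?_)
    · rw [Ideal.span_insert, Ideal.map_sup, Ideal.map_quotient_self, bot_sup_eq]
    · exact (Ideal.span_mono (s.erase_subset y)).trans hs.le
  calc (maximalIdeal (Q ⧸ Ideal.span {x})).spanFinrank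
      ≤ ((s.erase y).image (Ideal.Quotient.mk (Ideal.span {x}))).card := by
        rw [hspan, ← Set.ncard_coe_finset]
        exact Submodule.spanFinrank_span_le_ncard_of_finite (Finset.finite_toSet _)
    _ ≤ (s.erase y).card := Finset.card_image_le
    _ < s.card := Finset.card_erase_lt_of_mem hy
    _ = (maximalIdeal Q).spanFinrank := hcard

lemma isRegularLocalRing_quotient_span_singleton [IsRegularLocalRing Q] {n : ℕ}
    (hn : ringKrullDim Q = (n + 1 : ℕ)) {x : Q} (hx : x ∈ maximalIdeal Q)
    (hx2 : x ∉ maximalIdeal Q ^ 2) :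
    IsRegularLocalRing (Q ⧸ Ideal.span {x}) ∧ ringKrullDim (Q ⧸ Ideal.span {x}) = n := by
  have := isLocalRing_quotient_span_singleton hx
  have hdim := ringKrullDim_le_ringKrullDim_quotient_add_encard {x}
    (Set.singleton_subset_iff.2 ((ringJacobson_eq_maximalIdeal Q).ge hx))
  rw [Set.encard_singleton] at hdim
  have hlt := spanFinrank_maximalIdeal_quotient_span_singleton_lt hx hx2
  have hle := ringKrullDim_le_spanFinrank_maximalIdeal (Q ⧸ Ideal.span {x})
  have hQ := IsRegularLocalRing.spanFinrank_maximalIdeal (R := Q)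
  obtain ⟨d, hd⟩ := exists_ringKrullDim_eq_natCast (Q ⧸ Ideal.span {x})
  rw [isRegularLocalRing_iff]
  rw [hn] at hdim hQ
  rw [hd] at hdim hle ⊢
  norm_cast at *
  lia

end Quotient

section Induction

lemma minimalPrimes_not_maximalIdeal_le {R : Type*} [CommRing R] [IsLocalRing R]
    (h : ringKrullDim R ≠ 0) {p : Ideal R} (hp : p ∈ minimalPrimes R) : ¬ maximalIdeal R ≤ p := by
  intro hle
  have hpm : p = maximalIdeal R := (le_maximalIdeal hp.1.1.ne_top).antisymm hle
  refine h ?_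
  rw [← maximalIdeal_height_eq_ringKrullDim, Ideal.height_eq_zero_iff.2 (hpm ▸ hp)]
  rfl

lemma isDomain_of_isPrime_span_singleton {R : Type*} [CommRing R] [IsLocalRing R]
    [IsNoetherianRing R] {x : R} (hx : x ∈ maximalIdeal R) [(Ideal.span {x}).IsPrime]
    (hmin : ∀ p ∈ minimalPrimes R, x ∉ p) : IsDomain R := by
  obtain ⟨p, hp, hpx⟩ := Ideal.exists_minimalPrimes_le (I := (⊥ : Ideal R)) (J := Ideal.span {x})
    bot_le
  have hprime : p.IsPrime := hp.1.1
  have hbot : p = ⊥ := by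
    refine Submodule.eq_bot_of_le_smul_of_le_jacobson_bot (maximalIdeal R) p
      (IsNoetherian.noetherian _) ?_ (maximalIdeal_le_jacobson _)
    intro y hy
    obtain ⟨z, rfl⟩ := Ideal.mem_span_singleton'.1 (hpx hy)
    rw [mul_comm]
    exact Submodule.smul_mem_smul hx ((hprime.mem_or_mem hy).resolve_right (hmin p hp))
  rw [hbot] at hprime
  exact .of_bot_isPrime R

lemma isField_of_isRegularLocalRing {Q : Type*} [CommRing Q] [IsRegularLocalRing Q]
    (h : ringKrullDim Q = 0) : IsField Q := by
  have hQ := IsRegularLocalRing.spanFinrank_maximalIdeal (R := Q)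
  rw [h] at hQ
  rw [isField_iff_maximalIdeal_eq,
    ← Submodule.spanFinrank_eq_zero_iff_eq_bot (IsNoetherian.noetherian _)]
  exact_mod_cast hQ

lemma isDomain_of_isRegularLocalRing (Q : Type*) [CommRing Q] [IsRegularLocalRing Q] :
    IsDomain Q := by
  obtain ⟨n, hn⟩ := exists_ringKrullDim_eq_natCast Q
  induction n generalizing Q with
  | zero => exact (isField_of_isRegularLocalRing hn).isDomain
  | succ n ih =>
    have h0 : ringKrullDim Q ≠ 0 := by rw [hn]; exact_mod_cast n.succ_ne_zero
    obtain ⟨x, hx, hx2, hmin⟩ := exists_mem_maximalIdeal_notMem_sq h0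
      (minimalPrimes.finite_of_isNoetherianRing Q) (fun p hp => hp.1.1)
      (fun p hp => minimalPrimes_not_maximalIdeal_le h0 hp)
    obtain ⟨hreg, hdim⟩ := isRegularLocalRing_quotient_span_singleton hn hx hx2
    have : (Ideal.span {x}).IsPrime :=
      (Ideal.Quotient.isDomain_iff_prime _).1 (ih (Q ⧸ Ideal.span {x}) hdim)
    exact isDomain_of_isPrime_span_singleton hx hmin

lemma DepthGE.of_isRegularLocalRing {n : ℕ} {Q : Type*} [CommRing Q] [IsRegularLocalRing Q]
    (hn : ringKrullDim Q = n) : DepthGE Q n Q := by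
  induction n generalizing Q with
  | zero => exact .zero
  | succ n ih =>
    have h0 : ringKrullDim Q ≠ 0 := by rw [hn]; exact_mod_cast n.succ_ne_zero
    have := isDomain_of_isRegularLocalRing Q
    obtain ⟨x, hx, hx2, -⟩ := exists_mem_maximalIdeal_notMem_sq h0 Set.finite_empty (by simp)
      (by simp)
    obtain ⟨hreg, hdim⟩ := isRegularLocalRing_quotient_span_singleton hn hx hx2
    have hx0 : x ≠ 0 := fun h => hx2 (h ▸ zero_mem _)
    obtain ⟨e⟩ := nonempty_quotient_span_singleton_equiv_quotSMulTop x
    refine succ_iff.2 ⟨x, hx, (IsRegular.of_ne_zero hx0).left.isSMulRegular, of_linearEquiv ?_ e⟩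
    exact (iff_of_surjective Ideal.Quotient.mk_surjective).2 (ih hdim)

lemma exists_isSMulRegular_notMem_sq {R M : Type*} [CommRing R] [IsLocalRing R] [IsNoetherianRing R]
    (h : ringKrullDim R ≠ 0) [AddCommGroup M] [Module R M] [Module.Finite R M] {y : R}
    (hy : y ∈ maximalIdeal R) (hreg : IsSMulRegular M y) :
    ∃ x ∈ maximalIdeal R, x ∉ maximalIdeal R ^ 2 ∧ IsSMulRegular M x := by
  have hcompl (z : R) : (∃ p ∈ associatedPrimes R M, z ∈ p) ↔ ¬ IsSMulRegular M z := by
    simpa using Set.ext_iff.1 (biUnion_associatedPrimes_eq_compl_regular R M) z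
  obtain ⟨x, hx, hx2, hav⟩ := exists_mem_maximalIdeal_notMem_sq h (associatedPrimes.finite R M)
    (fun p hp => hp.isPrime) (fun p hp hle => (hcompl y).1 ⟨p, hp, hle hy⟩ hreg)
  exact ⟨x, hx, hx2, not_not.1 (mt (hcompl x).2 fun ⟨p, hp, hxp⟩ => hav p hp hxp)⟩

lemma free_of_depthGE_ringKrullDim {n : ℕ} {Q : Type u} [CommRing Q] [IsRegularLocalRing Q]
    (hn : ringKrullDim Q = n) {M : Type u} [AddCommGroup M] [Module Q M] [Module.Finite Q M]
    (h : DepthGE Q n M) : Module.Free Q M := by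
  induction n generalizing Q M with
  | zero =>
    let := (isField_of_isRegularLocalRing hn).toField
    exact .of_divisionRing Q M
  | succ n ih =>
    have h0 : ringKrullDim Q ≠ 0 := by rw [hn]; exact_mod_cast n.succ_ne_zero
    obtain ⟨y, hy, hyreg, -⟩ := DepthGE.succ_iff.1 h
    obtain ⟨x, hx, hx2, hreg⟩ := exists_isSMulRegular_notMem_sq h0 hy hyreg
    obtain ⟨_, hdim⟩ := isRegularLocalRing_quotient_span_singleton hn hx hx2
    have : Module.Finite (Q ⧸ Ideal.span {x}) (QuotSMulTop x M) :=
      .of_restrictScalars_finite Q _ _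
    have hquot := ih hdim ((DepthGE.iff_of_surjective Ideal.Quotient.mk_surjective).1
      ((DepthGE.quotSMulTop_iff hx hreg).2 h))
    have := Module.finitePresentation_of_finite Q M
    exact (Module.free_quotSMulTop_iff_free Q M (maximalIdeal_le_jacobson _ hx) hreg).1 hquot

lemma hasProjectiveDimensionLE_of_isRegularLocalRing {n m k : ℕ} {Q : Type u} [CommRing Q]
    [IsRegularLocalRing Q] (hn : ringKrullDim Q = n) (hmk : m + k = n) {M : Type u}
    [AddCommGroup M] [Module Q M] [Module.Finite Q M] (h : DepthGE Q m M) :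
    HasProjectiveDimensionLE (ModuleCat.of Q M) k := by
  induction k generalizing m M with
  | zero =>
    obtain rfl : m = n := hmk
    have := free_of_depthGE_ringKrullDim hn h
    exact hasProjectiveDimensionLE_of_free M 0
  | succ k ih =>
    obtain ⟨l, π, hπ⟩ := Module.Finite.exists_fin' Q M
    have hι := (LinearMap.ker π).subtype_injective
    have hexact := π.exact_subtype_ker_map
    refine (hasProjectiveDimensionLE_succ_iff hι hexact hπ k).2 (ih (m := m + 1) (by lia) ?_)
    exact .left_of_exact hι hexact hπ h (((DepthGE.of_isRegularLocalRing hn).mono (by lia)).pi l)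

end Induction

lemma IsRegularLocal.isRegularLocalRing {Q : Type*} [CommRing Q] [IsLocalRing Q]
    (h : IsRegularLocal Q) : IsRegularLocalRing Q := by
  have := h.1
  exact (IsRegularLocalRing.iff_finrank_cotangentSpace Q).2 h.2.symm

end RegularLocalRing

/-! ### Reduction modulo a regular element -/

section QuotSMulTop

open scoped Pointwise

variable {A : Type u} [CommRing A] {f : A}

lemma smul_eq_zero_of_module_quotient_span_singleton (f : A) {Z : Type*} [AddCommGroup Z]
    [Module A Z] [Module (A ⧸ Ideal.span {f}) Z] [IsScalarTower A (A ⧸ Ideal.span {f}) Z] (z : Z) :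
    f • z = 0 := by
  rw [← algebraMap_smul (A ⧸ Ideal.span {f}) f z, Ideal.Quotient.algebraMap_eq,
    Ideal.Quotient.mk_singleton_self, zero_smul]

lemma quotSMulTop_mk_eq_zero_iff {N : Type*} [AddCommGroup N] [Module A N] {x : N} :
    (Submodule.Quotient.mk x : QuotSMulTop f N) = 0 ↔ ∃ u, f • u = x := by
  simp only [Submodule.Quotient.mk_eq_zero, Submodule.mem_smul_pointwise_iff_exists,
    Submodule.mem_top, true_and]

section Reduction

variable {X Y Z : Type*} [AddCommGroup X] [AddCommGroup Y] [AddCommGroup Z] [Module A X]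
  [Module A Y] [Module A Z]

/-- The reduction modulo `f` of a linear map, as a map of modules over `A ⧸ (f)`. -/
abbrev quotSMulTopMap (f : A) (g : X →ₗ[A] Y) :
    QuotSMulTop f X →ₗ[A ⧸ Ideal.span {f}] QuotSMulTop f Y :=
  (QuotSMulTop.map f g).extendScalarsOfSurjective Ideal.Quotient.mk_surjective

lemma quotSMulTopMap_injective {a : X →ₗ[A] Y} {b : Y →ₗ[A] Z} (ha : Function.Injective a)
    (hab : Function.Exact a b) (hZ : IsSMulRegular Z f) :
    Function.Injective (quotSMulTopMap f a) := by
  have h := QuotSMulTop.map_first_exact_on_four_term_exact_of_isSMulRegular_last (r := f)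
    ((LinearMap.exact_zero_iff_injective PUnit a).2 ha) hab hZ
  rw [map_zero] at h
  exact (LinearMap.exact_zero_iff_injective _ _).1 h

lemma quotSMulTopMap_exact {a : X →ₗ[A] Y} {b : Y →ₗ[A] Z} (hab : Function.Exact a b)
    (hb : Function.Surjective b) : Function.Exact (quotSMulTopMap f a) (quotSMulTopMap f b) :=
  QuotSMulTop.map_exact f hab hb

lemma quotSMulTopMap_surjective {b : Y →ₗ[A] Z} (hb : Function.Surjective b) :
    Function.Surjective (quotSMulTopMap f b) :=
  QuotSMulTop.map_surjective f hb

lemma nonempty_quotSMulTop_equiv (f : A) (e : X ≃ₗ[A] Y) :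
    Nonempty (QuotSMulTop f X ≃ₗ[A ⧸ Ideal.span {f}] QuotSMulTop f Y) :=
  ⟨(QuotSMulTop.congr f e).extendScalarsOfSurjective Ideal.Quotient.mk_surjective⟩

lemma surjective_of_quotSMulTopMap_surjective [IsLocalRing A] [Module.Finite A Y]
    (hf : f ∈ maximalIdeal A) {a : X →ₗ[A] Y} (h : Function.Surjective (quotSMulTopMap f a)) :
    Function.Surjective a := by
  have hle : Ideal.span {f} ≤ (⊥ : Ideal A).jacobson :=
    (Ideal.span_singleton_le_iff_mem _).2 (maximalIdeal_le_jacobson _ hf)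
  refine a.surjective_of_surjective_comp_mkQ (Ideal.span {f}) hle ?_
  rw [Submodule.ideal_span_singleton_smul]
  exact h.comp (Submodule.mkQ_surjective _)

lemma nonempty_quotSMulTop_ker_equiv {b : Y →ₗ[A] Z} (hb : Function.Surjective b)
    (hZ : IsSMulRegular Z f) : Nonempty (QuotSMulTop f (LinearMap.ker b) ≃ₗ[A ⧸ Ideal.span {f}]
      LinearMap.ker (quotSMulTopMap f b)) := by
  have hexact := b.exact_subtype_ker_map
  have hinj := quotSMulTopMap_injective Subtype.val_injective hexact hZ
  exact ⟨LinearEquiv.ofInjective _ hinj ≪≫ₗ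
    LinearEquiv.ofEq _ _ (LinearMap.exact_iff.1 (quotSMulTopMap_exact hexact hb)).symm⟩

end Reduction

lemma nonempty_quotSMulTop_pi_equiv (f : A) (k : ℕ) :
    Nonempty (QuotSMulTop f (Fin k → A) ≃ₗ[A ⧸ Ideal.span {f}] Fin k → A ⧸ Ideal.span {f}) :=
  ⟨(QuotSMulTop.equivQuotTensor f (Fin k → A) ≪≫ₗ
    (TensorProduct.piScalarRight A A (A ⧸ Ideal.span {f}) (Fin k))).extendScalarsOfSurjective
      Ideal.Quotient.mk_surjective⟩

lemma hasProjectiveDimensionLE_quotSMulTop [IsLocalRing A] [IsNoetherianRing A]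
    (hA : IsSMulRegular A f) {N : Type u} [AddCommGroup N] [Module A N] [Module.Finite A N]
    (hN : IsSMulRegular N f) {n : ℕ} (h : HasProjectiveDimensionLE (ModuleCat.of A N) n) :
    HasProjectiveDimensionLE (ModuleCat.of (A ⧸ Ideal.span {f}) (QuotSMulTop f N)) n := by
  induction n generalizing N with
  | zero =>
    have := free_of_hasProjectiveDimensionLE_zero h
    exact hasProjectiveDimensionLE_of_free _ 0
  | succ n ih =>
    obtain ⟨k, π, hπ⟩ := Module.Finite.exists_fin' A N
    have hι := (LinearMap.ker π).subtype_injective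
    have hexact := π.exact_subtype_ker_map
    have hker := ih ((IsSMulRegular.pi fun _ => hA).submodule (LinearMap.ker π) f)
      ((hasProjectiveDimensionLE_succ_iff hι hexact hπ n).1 h)
    exact (hasProjectiveDimensionLE_succ_iff (quotSMulTopMap_injective hι hexact hN)
      (quotSMulTopMap_exact hexact hπ) (quotSMulTopMap_surjective hπ) n).2 hker

lemma exists_comp_eq_of_ker_le {X Y Z : Type*} [AddCommGroup X] [AddCommGroup Y] [AddCommGroup Z]
    [Module A X] [Module A Y] [Module A Z] {π : X →ₗ[A] Y} (hπ : Function.Surjective π)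
    {h : X →ₗ[A] Z} (hle : LinearMap.ker π ≤ LinearMap.ker h) : ∃ i : Y →ₗ[A] Z, i ∘ₗ π = h := by
  refine ⟨(LinearMap.ker π).liftQ h hle ∘ₗ (π.quotKerEquivOfSurjective hπ).symm, ?_⟩
  ext x
  simp

section Lift

variable {F M : Type*} [AddCommGroup F] [Module A F] [AddCommGroup M] [Module A M]
  [Module (A ⧸ Ideal.span {f}) M] [IsScalarTower A (A ⧸ Ideal.span {f}) M]

/-- The linear map from the reduction of `F` modulo `f` induced by a linear map from `F` to a module
over `A ⧸ (f)`. -/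
def quotSMulTopLift (π : F →ₗ[A] M) : QuotSMulTop f F →ₗ[A ⧸ Ideal.span {f}] M :=
  (Submodule.liftQ (f • ⊤) π <| by
    rintro _ ⟨u, -, rfl⟩
    exact (map_smul π f u).trans
      (smul_eq_zero_of_module_quotient_span_singleton f _)).extendScalarsOfSurjective
    Ideal.Quotient.mk_surjective

lemma quotSMulTopLift_surjective {π : F →ₗ[A] M} (hπ : Function.Surjective π) :
    Function.Surjective (quotSMulTopLift (f := f) π) := fun m =>
  (hπ m).elim fun u hu => ⟨Submodule.Quotient.mk u, hu⟩

variable (f) in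
/-- For a linear map `π : F → M` to a module over `A ⧸ (f)`, the comparison map from the reduction
of the kernel of `π` to the kernel of the reduction `F ⧸ f F → M` of `π`. -/
def kerReduction (π : F →ₗ[A] M) : QuotSMulTop f (LinearMap.ker π) →ₗ[A ⧸ Ideal.span {f}]
    LinearMap.ker (quotSMulTopLift (f := f) π) :=
  (quotSMulTopMap f (LinearMap.ker π).subtype).codRestrict _ fun z => by
    obtain ⟨z, rfl⟩ := Submodule.Quotient.mk_surjective _ z
    exact z.2

lemma kerReduction_surjective (π : F →ₗ[A] M) : Function.Surjective (kerReduction f π) := by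
  rintro ⟨y, hy⟩
  obtain ⟨u, rfl⟩ := Submodule.Quotient.mk_surjective _ y
  exact ⟨Submodule.Quotient.mk ⟨u, hy⟩, rfl⟩

lemma kerReduction_mk_eq_zero_iff (π : F →ₗ[A] M) {z : LinearMap.ker π} :
    kerReduction f π (Submodule.Quotient.mk z) = 0 ↔ ∃ u : F, f • u = z :=
  Subtype.ext_iff.trans quotSMulTop_mk_eq_zero_iff

variable (f) in
/-- Multiplication by `f` on `F`, which takes values in the kernel of any linear map from `F` to a
module over `A ⧸ (f)`. -/
def smulToKer (π : F →ₗ[A] M) : F →ₗ[A] LinearMap.ker π :=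
  (LinearMap.lsmul A F f).codRestrict _ fun u =>
    (map_smul π f u).trans (smul_eq_zero_of_module_quotient_span_singleton f _)

lemma exists_injective_exact_kerReduction (hF : IsSMulRegular F f) {π : F →ₗ[A] M}
    (hπ : Function.Surjective π) :
    ∃ i : M →ₗ[A ⧸ Ideal.span {f}] QuotSMulTop f (LinearMap.ker π),
      Function.Injective i ∧ Function.Exact i (kerReduction f π) := by
  let j := Submodule.mkQ (f • (⊤ : Submodule A (LinearMap.ker π))) ∘ₗ smulToKer f π
  have hker : LinearMap.ker π = LinearMap.ker j := by
    ext u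
    refine Iff.trans ⟨fun hu => ⟨⟨u, hu⟩, rfl⟩, ?_⟩ quotSMulTop_mk_eq_zero_iff.symm
    rintro ⟨v, hv⟩
    exact hF (congrArg Subtype.val hv) ▸ v.2
  obtain ⟨i, hi⟩ := exists_comp_eq_of_ker_le hπ hker.le
  replace hi : ∀ u, i (π u) = Submodule.Quotient.mk (smulToKer f π u) := LinearMap.congr_fun hi
  refine ⟨i.extendScalarsOfSurjective Ideal.Quotient.mk_surjective, ?_, fun z => ?_⟩
  · refine (injective_iff_map_eq_zero i).2 fun m hm => ?_
    obtain ⟨u, rfl⟩ := hπ m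
    exact hker.ge ((hi u).symm.trans hm)
  · obtain ⟨z, rfl⟩ := Submodule.Quotient.mk_surjective _ z
    rw [kerReduction_mk_eq_zero_iff]
    constructor
    · rintro ⟨u, hu⟩
      exact ⟨π u, (hi u).trans (congrArg _ (Subtype.ext hu))⟩
    · rintro ⟨m, hm⟩
      obtain ⟨u, rfl⟩ := hπ m
      rw [← kerReduction_mk_eq_zero_iff, ← hm]
      exact (congrArg _ (hi u)).trans ((kerReduction_mk_eq_zero_iff π).2 ⟨u, rfl⟩)

end Lift

lemma subsingleton_ext_one_quotient (hA : IsSMulRegular A f) {F M : Type u}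
    [AddCommGroup F] [Module A F] [Module.Free A F] [AddCommGroup M] [Module A M]
    [Module (A ⧸ Ideal.span {f}) M] [IsScalarTower A (A ⧸ Ideal.span {f}) M] {π : F →ₗ[A] M}
    (hπ : Function.Surjective π)
    (h : Subsingleton (Abelian.Ext (ModuleCat.of A (LinearMap.ker π)) (ModuleCat.of A A) 1)) :
    Subsingleton (Abelian.Ext (ModuleCat.of (A ⧸ Ideal.span {f}) M)
      (ModuleCat.of (A ⧸ Ideal.span {f}) (A ⧸ Ideal.span {f})) 1) := by
  rw [subsingleton_ext_one_iff_forall_exists_comp_eq Subtype.val_injective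
    (quotSMulTopLift (f := f) π).exact_subtype_ker_map (quotSMulTopLift_surjective hπ)]
  intro g
  let κ := (kerReduction f π).restrictScalars A ∘ₗ Submodule.mkQ _
  have hκ (u : F) : κ (smulToKer f π u) = 0 := (kerReduction_mk_eq_zero_iff π).2 ⟨u, rfl⟩
  have hinj : Function.Injective (LinearMap.lsmul A A f) := hA
  have hexact : Function.Exact (LinearMap.lsmul A A f) (Submodule.mkQ (Ideal.span {f})) :=
    fun y => (Submodule.Quotient.mk_eq_zero _).trans
      (by simp [Ideal.mem_span_singleton, dvd_def, eq_comm])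
  obtain ⟨φ, hφ⟩ := exists_comp_eq_of_subsingleton_ext_one hinj hexact
    (Submodule.mkQ_surjective _) h (g.restrictScalars A ∘ₗ κ)
  replace hφ : ∀ z, Submodule.mkQ (Ideal.span {f}) (φ z) = g (κ z) := LinearMap.congr_fun hφ
  have hmem (u : F) : φ (smulToKer f π u) ∈ LinearMap.range (LinearMap.lsmul A A f) :=
    (hexact _).1 (by rw [hφ, hκ, map_zero])
  let ψ := (φ ∘ₗ smulToKer f π).codRestrictOfInjective (LinearMap.lsmul A A f) hinj hmem
  have hψ (z : LinearMap.ker π) : ψ z = φ z :=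
    hinj ((LinearMap.codRestrictOfInjective_comp_apply _ _ hinj hmem _).trans (map_smul φ f z))
  refine ⟨quotSMulTopLift (Submodule.mkQ (Ideal.span {f}) ∘ₗ ψ), LinearMap.ext fun x => ?_⟩
  obtain ⟨z, rfl⟩ := kerReduction_surjective π x
  obtain ⟨z, rfl⟩ := Submodule.Quotient.mk_surjective _ z
  exact (congrArg _ (hψ z)).trans (hφ z)

end QuotSMulTop

/-! ### Complete intersections -/

/-- A class of finite modules that is closed under isomorphisms and extensions and contains, for
each of its members, some syzygy. Unlike resolving subcategories, such classes can be transported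
along quotients by regular elements and along completions. -/
structure IsPreresolving (A : Type u) [CommRing A] (C : Set (ModuleCat.{u} A)) : Prop where
  finite : ∀ M ∈ C, Module.Finite A M
  isoClosed : ∀ {M N : ModuleCat.{u} A}, M ∈ C → (M ≃ₗ[A] N) → N ∈ C
  extClosed : ∀ {X Y Z : ModuleCat.{u} A} {f : X →ₗ[A] Y} {g : Y →ₗ[A] Z}, Function.Injective f →
    Function.Exact f g → Function.Surjective g → X ∈ C → Z ∈ C → Y ∈ C
  exists_ker_mem : ∀ M ∈ C, ∃ (k : ℕ) (π : (Fin k → A) →ₗ[A] M), Function.Surjective π ∧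
    ModuleCat.of A (LinearMap.ker π) ∈ C

/-- The properties of complete intersections of dimension `n` from which the theorem follows, in a
form that passes from `A` to `A ⧸ (f)` for a regular element `f`. -/
structure IsCILike (A : Type u) [CommRing A] [IsLocalRing A] (n : ℕ) : Prop where
  isNoetherianRing : IsNoetherianRing A
  ringKrullDim_eq : ringKrullDim A = n
  depthGE_self : DepthGE A n A
  depthGE_of_mem : ∀ {C : Set (ModuleCat.{u} A)}, IsPreresolving A C →
    (∀ M ∈ C, ∀ m, HasProjectiveDimensionLE M m → Module.Free A M) → ∀ M ∈ C, DepthGE A n M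
  subsingleton_ext_one : ∀ (N : Type u) [AddCommGroup N] [Module A N] [Module.Finite A N],
    DepthGE A n N → Subsingleton (Abelian.Ext (ModuleCat.of A N) (ModuleCat.of A A) 1)

lemma DepthGE.of_free {A M : Type u} [CommRing A] [IsLocalRing A] [IsNoetherianRing A]
    [AddCommGroup M] [Module A M] [Module.Free A M] [Module.Finite A M] {n : ℕ}
    (h : DepthGE A n A) : DepthGE A n M :=
  (h.pi _).of_linearEquiv (Module.finBasis A M).equivFun.symm

lemma IsCILike.of_isRegularLocalRing {Q : Type u} [CommRing Q] [IsRegularLocalRing Q] {n : ℕ}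
    (hn : ringKrullDim Q = n) : IsCILike Q n where
  isNoetherianRing := inferInstance
  ringKrullDim_eq := hn
  depthGE_self := .of_isRegularLocalRing hn
  depthGE_of_mem {C} hC hfree M hM := by
    have := hC.finite M hM
    have := hfree M hM n (hasProjectiveDimensionLE_of_isRegularLocalRing hn (zero_add n) .zero)
    exact .of_free (.of_isRegularLocalRing hn)
  subsingleton_ext_one N _ _ _ hN := by
    have := free_of_depthGE_ringKrullDim hn hN
    have := (IsProjective.iff_projective N).1 (inferInstance : Module.Projective Q N)
    exact subsingleton_of_forall_eq 0 fun e => e.eq_zero_of_projective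

section Quotient

open scoped Pointwise

variable {A : Type u} [CommRing A] {f : A} {C : Set (ModuleCat.{u} (A ⧸ Ideal.span {f}))}

lemma IsPreresolving.exists_quotSMulTop_pi_ker_mem (hC : IsPreresolving (A ⧸ Ideal.span {f}) C)
    {M : ModuleCat.{u} (A ⧸ Ideal.span {f})} (hM : M ∈ C) :
    ∃ (k : ℕ) (π : QuotSMulTop f (Fin k → A) →ₗ[A ⧸ Ideal.span {f}] M), Function.Surjective π ∧
      ModuleCat.of (A ⧸ Ideal.span {f}) (LinearMap.ker π) ∈ C := by
  obtain ⟨k, π, hπ, hker⟩ := hC.exists_ker_mem M hM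
  obtain ⟨e⟩ := nonempty_quotSMulTop_pi_equiv f k
  exact ⟨k, π ∘ₗ e, hπ.comp e.surjective, hC.isoClosed hker (e.ofSubmodule' (LinearMap.ker π)).symm⟩

/-- The finite `f`-regular `A`-modules whose reduction modulo `f` belongs to a given class `C` of
modules over `A ⧸ (f)`. -/
def liftedClass (C : Set (ModuleCat.{u} (A ⧸ Ideal.span {f}))) : Set (ModuleCat.{u} A) :=
  {N | Module.Finite A N ∧ IsSMulRegular N f ∧
    ModuleCat.of (A ⧸ Ideal.span {f}) (QuotSMulTop f N) ∈ C}

variable [IsLocalRing A] [IsNoetherianRing A]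

lemma exists_ker_mem_liftedClass (hf : f ∈ maximalIdeal A)
    (hA : IsSMulRegular A f) (hC : IsPreresolving (A ⧸ Ideal.span {f}) C) {N : ModuleCat.{u} A}
    (hN : N ∈ liftedClass C) : ∃ (k : ℕ) (π : (Fin k → A) →ₗ[A] N), Function.Surjective π ∧
      ModuleCat.of A (LinearMap.ker π) ∈ liftedClass C := by
  obtain ⟨_, hreg, hmem⟩ := hN
  obtain ⟨k, π', hπ', hker⟩ := hC.exists_quotSMulTop_pi_ker_mem hmem
  obtain ⟨π, hπ⟩ := Module.projective_lifting_property (Submodule.mkQ (f • (⊤ : Submodule A N)))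
    (π'.restrictScalars A ∘ₗ Submodule.mkQ _) (Submodule.mkQ_surjective _)
  obtain rfl : quotSMulTopMap f π = π' := LinearMap.ext fun z => by
    obtain ⟨u, rfl⟩ := Submodule.Quotient.mk_surjective _ z
    exact LinearMap.congr_fun hπ u
  have hsurj := surjective_of_quotSMulTopMap_surjective hf hπ'
  obtain ⟨e⟩ := nonempty_quotSMulTop_ker_equiv hsurj hreg
  exact ⟨k, π, hsurj, inferInstanceAs (Module.Finite A (LinearMap.ker π)),
    (IsSMulRegular.pi fun _ => hA).submodule _ _, hC.isoClosed hker e.symm⟩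

lemma isPreresolving_liftedClass (hf : f ∈ maximalIdeal A) (hA : IsSMulRegular A f)
    (hC : IsPreresolving (A ⧸ Ideal.span {f}) C) : IsPreresolving A (liftedClass C) where
  finite _ h := h.1
  isoClosed {M N} h e := by
    obtain ⟨_, hreg, hmem⟩ := h
    obtain ⟨e'⟩ := nonempty_quotSMulTop_equiv f e
    exact ⟨Module.Finite.equiv e, (e.isSMulRegular_congr f).1 hreg,
      hC.isoClosed (M := .of _ (QuotSMulTop f M)) (N := .of _ (QuotSMulTop f N)) hmem e'⟩
  extClosed {X Y Z a b} ha hab hb hX hZ := by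
    obtain ⟨_, hregX, hmemX⟩ := hX
    obtain ⟨_, hregZ, hmemZ⟩ := hZ
    exact ⟨Module.Finite.of_exact hab hb,
      isSMulRegular_of_range_eq_ker ha (LinearMap.exact_iff.1 hab).symm hregX hregZ,
      hC.extClosed (X := .of _ (QuotSMulTop f X)) (Y := .of _ (QuotSMulTop f Y))
        (Z := .of _ (QuotSMulTop f Z)) (quotSMulTopMap_injective ha hab hregZ)
        (quotSMulTopMap_exact hab hb) (quotSMulTopMap_surjective hb) hmemX hmemZ⟩
  exists_ker_mem _ hN := exists_ker_mem_liftedClass hf hA hC hN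

lemma exists_ringKrullDim_quotient_span_singleton_eq (hf : f ∈ maximalIdeal A)
    (hA : IsSMulRegular A f) : ∃ d : ℕ,
      ringKrullDim A = (d + 1 : ℕ) ∧ ringKrullDim (A ⧸ Ideal.span {f}) = d := by
  have := isLocalRing_quotient_span_singleton hf
  obtain ⟨d, hd⟩ := exists_ringKrullDim_eq_natCast (A ⧸ Ideal.span {f})
  refine ⟨d, ?_, hd⟩
  rw [← ringKrullDim_quotient_span_singleton_succ_eq_ringKrullDim hA hf, hd, Nat.cast_add_one]

variable [IsLocalRing (A ⧸ Ideal.span {f})]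

lemma IsCILike.depthGE_of_mem_quotient (hf : f ∈ maximalIdeal A) (hA : IsSMulRegular A f) {n : ℕ}
    (h : IsCILike A (n + 1)) (hC : IsPreresolving (A ⧸ Ideal.span {f}) C)
    (hfree : ∀ M ∈ C, ∀ m, HasProjectiveDimensionLE M m → Module.Free (A ⧸ Ideal.span {f}) M)
    {M : ModuleCat.{u} (A ⧸ Ideal.span {f})} (hM : M ∈ C) : DepthGE (A ⧸ Ideal.span {f}) n M := by
  have hlift_depth : ∀ N ∈ liftedClass C, DepthGE A (n + 1) N :=
    h.depthGE_of_mem (isPreresolving_liftedClass hf hA hC) fun N ⟨_, hreg, hmem⟩ m hm => by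
      have := Module.finitePresentation_of_finite A N
      exact (Module.free_quotSMulTop_iff_free A N (maximalIdeal_le_jacobson _ hf) hreg).1
        (hfree _ hmem m (hasProjectiveDimensionLE_quotSMulTop hA hreg hm))
  let _ : Module A M := Module.compHom M (algebraMap A (A ⧸ Ideal.span {f}))
  have : IsScalarTower A (A ⧸ Ideal.span {f}) M := .of_algebraMap_smul fun _ _ => rfl
  obtain ⟨k, π, hπ, hker⟩ := hC.exists_quotSMulTop_pi_ker_mem hM
  let π₀ : (Fin k → A) →ₗ[A] M := π.restrictScalars A ∘ₗ Submodule.mkQ _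
  have hπ₀ : Function.Surjective π₀ := hπ.comp (Submodule.mkQ_surjective _)
  have hlift_eq : quotSMulTopLift π₀ = π := LinearMap.ext fun z => by
    obtain ⟨u, rfl⟩ := Submodule.Quotient.mk_surjective _ z
    rfl
  have := hC.finite M hM
  have : Module.Finite A M := .trans (A ⧸ Ideal.span {f}) M
  have hreg : IsSMulRegular (Fin k → A) f := .pi fun _ => hA
  obtain ⟨i, hi, hexact⟩ := exists_injective_exact_kerReduction hreg hπ₀
  have hmem : ModuleCat.of A (LinearMap.ker π₀) ∈ liftedClass C :=
    ⟨inferInstanceAs (Module.Finite A (LinearMap.ker π₀)), hreg.submodule _ _,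
      hC.extClosed (Y := .of _ (QuotSMulTop f (LinearMap.ker π₀))) hi hexact
        (kerReduction_surjective π₀) hM (hlift_eq ▸ hker)⟩
  refine (DepthGE.iff_of_surjective Ideal.Quotient.mk_surjective).1 ?_
  exact DepthGE.right_of_exact Subtype.val_injective π₀.exact_subtype_ker_map hπ₀
    (hlift_depth _ hmem) ((h.depthGE_self.pi k).mono n.le_succ)

lemma IsCILike.quotient (hf : f ∈ maximalIdeal A) (hA : IsSMulRegular A f) {n : ℕ}
    (h : IsCILike A (n + 1)) : IsCILike (A ⧸ Ideal.span {f}) n where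
  isNoetherianRing := inferInstance
  ringKrullDim_eq := by
    obtain ⟨d, hAd, hd⟩ := exists_ringKrullDim_quotient_span_singleton_eq hf hA
    rwa [show n = d from Nat.succ_injective (Nat.cast_injective (h.ringKrullDim_eq.symm.trans hAd))]
  depthGE_self := by
    obtain ⟨e⟩ := nonempty_quotient_span_singleton_equiv_quotSMulTop f
    exact (DepthGE.iff_of_surjective Ideal.Quotient.mk_surjective).1
      (((DepthGE.quotSMulTop_iff hf hA).2 h.depthGE_self).of_linearEquiv e.symm)
  depthGE_of_mem hC hfree _ hM := h.depthGE_of_mem_quotient hf hA hC hfree hM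
  subsingleton_ext_one N _ _ _ hN := by
    let _ : Module A N := Module.compHom N (algebraMap A (A ⧸ Ideal.span {f}))
    have : IsScalarTower A (A ⧸ Ideal.span {f}) N := .of_algebraMap_smul fun _ _ => rfl
    have : Module.Finite A N := .trans (A ⧸ Ideal.span {f}) N
    obtain ⟨k, π, hπ⟩ := Module.Finite.exists_fin' A N
    refine subsingleton_ext_one_quotient hA hπ (h.subsingleton_ext_one _ ?_)
    exact DepthGE.left_of_exact Subtype.val_injective π.exact_subtype_ker_map hπ
      ((DepthGE.iff_of_surjective Ideal.Quotient.mk_surjective).2 hN) (h.depthGE_self.pi k)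

lemma mem_maximalIdeal_of_isRegular_cons {A : Type*} [CommRing A] [IsLocalRing A] {f : A}
    {fs : List A} (h : RingTheory.Sequence.IsRegular A (f :: fs)) : f ∈ maximalIdeal A := by
  refine (mem_maximalIdeal f).2 fun hf => h.top_ne_smul ?_
  have htop : Ideal.ofList (f :: fs) = ⊤ := Ideal.eq_top_of_isUnit_mem _
    (Ideal.subset_span List.mem_cons_self) hf
  rw [htop, Submodule.top_smul]

lemma exists_isCILike_quotient_ofList {A : Type u} [CommRing A] [IsLocalRing A] {n : ℕ}
    (h : IsCILike A n) {fs : List A} (hfs : RingTheory.Sequence.IsRegular A fs) :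
    ∃ (S : Type u) (_ : CommRing S) (_ : IsLocalRing S) (m : ℕ),
      IsCILike S m ∧ Nonempty ((A ⧸ Ideal.ofList fs) ≃+* S) := by
  induction hlen : fs.length generalizing A fs n with
  | zero =>
    obtain rfl := List.length_eq_zero_iff.1 hlen
    exact ⟨A, _, _, n, h, ⟨(Ideal.quotEquivOfEq Ideal.ofList_nil).trans (RingEquiv.quotientBot A)⟩⟩
  | succ c ih =>
    obtain ⟨f, fs, rfl⟩ := List.exists_cons_of_length_eq_add_one hlen
    have := h.isNoetherianRing
    have hf := mem_maximalIdeal_of_isRegular_cons hfs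
    obtain ⟨hA, hfs⟩ := (RingTheory.Sequence.isRegular_cons_iff' _ _ _).1 hfs
    have := isLocalRing_quotient_span_singleton hf
    obtain ⟨d, hd, -⟩ := exists_ringKrullDim_quotient_span_singleton_eq hf hA
    obtain rfl : n = d + 1 := Nat.cast_injective (h.ringKrullDim_eq.symm.trans hd)
    obtain ⟨e⟩ := nonempty_quotient_span_singleton_equiv_quotSMulTop f
    obtain ⟨S, i, j, m, hS, ⟨e'⟩⟩ := ih (h.quotient hf hA) ((LinearEquiv.isRegular_congr
      (e.extendScalarsOfSurjective Ideal.Quotient.mk_surjective) _).2 hfs) (by simpa using hlen)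
    have hmap : (Ideal.ofList fs).map (Ideal.Quotient.mk (Ideal.span {f})) =
        Ideal.ofList (fs.map (algebraMap A (A ⧸ Ideal.span {f}))) := Ideal.map_ofList _ _
    exact ⟨S, i, j, m, hS, ⟨(Ideal.quotEquivOfEq (Ideal.ofList_cons f fs)).trans <|
      (DoubleQuot.quotQuotEquivQuotSup _ _).symm.trans <| (Ideal.quotEquivOfEq hmap).trans e'⟩⟩

end Quotient

/-! ### Completion and flat base change -/

section CompletionLike

/-- A local homomorphism `R → S` of local rings sharing the formal properties of the map from `R` to
its completion: it is flat, the maximal ideal of `R` generates that of `S`, and the image of `R` is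
dense for the adic topology. -/
structure IsCompletionLike (R S : Type u) [CommRing R] [CommRing S] [IsLocalRing R] [IsLocalRing S]
    [Algebra R S] : Prop where
  flat : Module.Flat R S
  isLocalHom : IsLocalHom (algebraMap R S)
  map_maximalIdeal : (maximalIdeal R).map (algebraMap R S) = maximalIdeal S
  exists_sub_mem : ∀ (n : ℕ) (s : S),
    ∃ r : R, s - algebraMap R S r ∈ (maximalIdeal R ^ n).map (algebraMap R S)

variable {R S : Type u} [CommRing R] [CommRing S] [IsLocalRing R] [IsLocalRing S] [Algebra R S]

lemma isCompletionLike_adicCompletion (R : Type u) [CommRing R] [IsLocalRing R]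
    [IsNoetherianRing R] : IsCompletionLike R (AdicCompletion (maximalIdeal R) R) where
  flat := AdicCompletion.flat_of_isNoetherian _
  isLocalHom := inferInstance
  map_maximalIdeal := AdicCompletion.maximalIdeal_eq_map.symm
  exists_sub_mem n s := by
    obtain ⟨r, hr⟩ := Ideal.Quotient.mk_surjective (AdicCompletion.evalₐ (maximalIdeal R) n s)
    have hsub : AdicCompletion.evalₐ (maximalIdeal R) n (s - algebraMap R _ r) = 0 := by
      rw [map_sub, ← hr, AlgHom.commutes]
      exact sub_self _
    refine ⟨r, ?_⟩
    rw [← Submodule.restrictScalars_mem R, ← Ideal.smul_top_eq_map,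
      AdicCompletion.pow_smul_top_eq_ker_eval (maximalIdeal R).fg_of_isNoetherianRing,
      LinearMap.mem_ker, ← AdicCompletion.factor_evalₐ_eq_eval (h := by simp), hsub, map_zero]

namespace IsCompletionLike

lemma trans_algEquiv {T : Type u} [CommRing T] [IsLocalRing T] [Algebra R T]
    (h : IsCompletionLike R S) (e : S ≃ₐ[R] T) : IsCompletionLike R T := by
  have hmap : algebraMap R T = (e.toRingEquiv : S →+* T).comp (algebraMap R S) :=
    e.toAlgHom.comp_algebraMap.symm
  have := h.flat
  have := h.isLocalHom
  refine ⟨.of_linearEquiv e.symm.toLinearEquiv, hmap ▸ inferInstance, ?_, fun n t => ?_⟩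
  · rw [hmap, ← Ideal.map_map, h.map_maximalIdeal]
    exact IsLocalRing.map_ringEquiv_maximalIdeal e.toRingEquiv
  · obtain ⟨r, hr⟩ := h.exists_sub_mem n (e.symm t)
    refine ⟨r, ?_⟩
    have hr' := Ideal.mem_map_of_mem (e.toRingEquiv : S →+* T) hr
    rw [Ideal.map_map, ← hmap] at hr'
    simpa using hr'

lemma ringKrullDim_le [IsNoetherianRing R] [IsNoetherianRing S] (h : IsCompletionLike R S) :
    ringKrullDim R ≤ ringKrullDim S := by
  have := h.flat
  have := h.isLocalHom
  have : Algebra.HasGoingDown R S := .of_flat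
  have : (maximalIdeal S).LiesOver (maximalIdeal R) :=
    ⟨(IsLocalRing.maximalIdeal_comap (algebraMap R S)).symm⟩
  rw [← maximalIdeal_height_eq_ringKrullDim, ← maximalIdeal_height_eq_ringKrullDim,
    Ideal.height_eq_height_add_of_liesOver_of_hasGoingDown (maximalIdeal R) (maximalIdeal S)]
  exact WithBot.coe_le_coe.2 le_self_add

end IsCompletionLike

lemma IsCompleteIntersection.exists_isCompletionLike_isCILike [IsNoetherianRing R]
    (h : IsCompleteIntersection R) : ∃ (S : Type u) (_ : CommRing S) (_ : IsLocalRing S)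
      (_ : Algebra R S) (n : ℕ), IsCompletionLike R S ∧ IsCILike S n := by
  obtain ⟨⟨Q, hQ, fs, hfs, e⟩⟩ := h
  have := hQ.isRegularLocalRing
  obtain ⟨n, hn⟩ := exists_ringKrullDim_eq_natCast Q
  obtain ⟨S, _, _, m, hS, ⟨e'⟩⟩ := exists_isCILike_quotient_ofList (.of_isRegularLocalRing hn) hfs
  let _ : Algebra R S := ((e.trans e').toRingHom.comp
    (algebraMap R (AdicCompletion (maximalIdeal R) R))).toAlgebra
  exact ⟨S, _, _, _, m, (isCompletionLike_adicCompletion R).trans_algEquiv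
    (AlgEquiv.ofRingEquiv (f := e.trans e') fun _ => rfl), hS⟩

end CompletionLike

section BaseChange

open TensorProduct

variable {R S : Type u} [CommRing R] [CommRing S] [Algebra R S] {W : Type u} [AddCommGroup W]
  [Module R W]

section Exact

variable {K F : Type u} [AddCommGroup K] [Module R K] [AddCommGroup F] [Module R F]
  {i : K →ₗ[R] F} {p : F →ₗ[R] W}

variable (S) in
lemma baseChange_injective [Module.Flat R S] (hi : Function.Injective i) :
    Function.Injective (i.baseChange S) :=
  Module.Flat.lTensor_preserves_injective_linearMap (M := S) i hi

variable (S) in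
lemma baseChange_surjective (hp : Function.Surjective p) : Function.Surjective (p.baseChange S) :=
  LinearMap.lTensor_surjective S hp

variable (S) in
lemma baseChange_exact (h : Function.Exact i p) (hp : Function.Surjective p) :
    Function.Exact (i.baseChange S) (p.baseChange S) :=
  lTensor_exact S h hp

end Exact

variable [Module.Flat R S] [IsNoetherianRing R] [IsLocalRing R] [IsLocalRing S]
  [IsLocalHom (algebraMap R S)] [Module.Finite R W]

lemma subsingleton_ext_one_of_baseChange {N : Type u} [AddCommGroup N] [Module R N]
    (h : Subsingleton (Abelian.Ext (ModuleCat.of S (S ⊗[R] W)) (ModuleCat.of S (S ⊗[R] N)) 1)) :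
    Subsingleton (Abelian.Ext (ModuleCat.of R W) (ModuleCat.of R N) 1) := by
  obtain ⟨k, π, hπ⟩ := Module.Finite.exists_fin' R W
  set ι := (LinearMap.ker π).subtype
  have hι : Function.Injective ι := Subtype.val_injective
  have hex : Function.Exact ι π := π.exact_subtype_ker_map
  have := Module.finitePresentation_of_finite R (LinearMap.ker π)
  have : Module.FaithfullyFlat R S := .of_flat_of_isLocalHom
  have hF := Module.FinitePresentation.isBaseChange_map R (Fin k → R) N S
  have hK := Module.FinitePresentation.isBaseChange_map R (LinearMap.ker π) N S
  have hnat (z : S ⊗[R] ((Fin k → R) →ₗ[R] N)) :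
      hK.equiv ((ι.lcomp R N).lTensor S z) = hF.equiv z ∘ₗ ι.baseChange S := by
    induction z with
    | zero => simp
    | tmul s φ => exact congrArg (s • ·) (LinearMap.baseChange_comp (A := S) ι φ)
    | add x y hx hy => simp only [map_add, hx, hy, LinearMap.add_comp]
  have hsurj : Function.Surjective (ι.lcomp R N) := by
    refine (Module.FaithfullyFlat.lTensor_surjective_iff_surjective R S _).1 fun z => ?_
    obtain ⟨ψ, hψ⟩ := (subsingleton_ext_one_iff_forall_exists_comp_eq (baseChange_injective S hι)
      (baseChange_exact S hex hπ) (baseChange_surjective S hπ)).1 h (hK.equiv z)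
    refine ⟨hF.equiv.symm ψ, hK.equiv.injective ?_⟩
    rw [hnat, LinearEquiv.apply_symm_apply, hψ]
  exact (subsingleton_ext_one_iff_forall_exists_comp_eq hι hex hπ).2 hsurj

lemma hasProjectiveDimensionLE_of_baseChange {n : ℕ}
    (h : HasProjectiveDimensionLE (ModuleCat.of S (S ⊗[R] W)) n) :
    HasProjectiveDimensionLE (ModuleCat.of R W) n := by
  induction n generalizing W with
  | zero =>
    have := free_of_hasProjectiveDimensionLE_zero h
    have : Module.FaithfullyFlat R S := .of_flat_of_isLocalHom
    have : Module.Flat R W := .of_flat_tensorProduct R W S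
    have : Module.Free R W := Module.free_of_flat_of_isLocalRing
    exact hasProjectiveDimensionLE_of_free W 0
  | succ n ih =>
    obtain ⟨k, π, hπ⟩ := Module.Finite.exists_fin' R W
    have hι := (LinearMap.ker π).subtype_injective
    have hex := π.exact_subtype_ker_map
    exact (hasProjectiveDimensionLE_succ_iff hι hex hπ n).2 <|
      ih ((hasProjectiveDimensionLE_succ_iff (baseChange_injective S hι)
        (baseChange_exact S hex hπ) (baseChange_surjective S hπ) n).1 h)

end BaseChange

/-! ### Freeness on the punctured spectrum -/

section StableAnnihilator

variable {R M N P : Type*} [CommRing R] [AddCommGroup M] [AddCommGroup N] [AddCommGroup P]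
  [Module R M] [Module R N] [Module R P]

variable (R M N) in
/-- The maps `M → N` that factor through a finite free module. They are the image of
`M* ⊗ N`, since a composite `M → Rᵏ → N` is a sum of `k` maps of the form `m ↦ φ m • n`. -/
def freeFactorMaps : Submodule R (M →ₗ[R] N) := LinearMap.range (dualTensorHom R M N)

lemma comp_mem_freeFactorMaps (g : N →ₗ[R] P) {f : M →ₗ[R] N} (hf : f ∈ freeFactorMaps R M N) :
    g ∘ₗ f ∈ freeFactorMaps R M P := by
  obtain ⟨t, rfl⟩ := hf
  exact ⟨g.lTensor _ t, LinearMap.congr_fun (dualTensorHom_comp_lTensor (M := M) g) t⟩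

lemma mem_freeFactorMaps_comp {g : N →ₗ[R] P} (hg : g ∈ freeFactorMaps R N P) (f : M →ₗ[R] N) :
    g ∘ₗ f ∈ freeFactorMaps R M P := by
  obtain ⟨t, rfl⟩ := hg
  exact ⟨f.dualMap.rTensor _ t, LinearMap.congr_fun (dualTensorHom_comp_rTensor_dualMap f) t⟩

lemma mem_freeFactorMaps_of_free [Module.Finite R M] [Module.Free R M] (f : M →ₗ[R] N) :
    f ∈ freeFactorMaps R M N :=
  (dualTensorHom_bijective ..).surjective f

lemma exists_mem_freeFactorMaps_comp_eq {g : N →ₗ[R] P} (hg : Function.Surjective g)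
    {f : M →ₗ[R] P} (hf : f ∈ freeFactorMaps R M P) : ∃ h ∈ freeFactorMaps R M N, g ∘ₗ h = f := by
  obtain ⟨t, rfl⟩ := hf
  obtain ⟨s, rfl⟩ := LinearMap.lTensor_surjective (Module.Dual R M) hg t
  exact ⟨_, ⟨s, rfl⟩, (LinearMap.congr_fun (dualTensorHom_comp_lTensor (M := M) g) s).symm⟩

variable (R M) in
/-- The stable annihilator of `M`: the scalars whose multiplication on `M` factors through a
finite free module. -/
def stableAnnihilator : Ideal R :=
  (freeFactorMaps R M M).comap (LinearMap.toSpanSingleton R (M →ₗ[R] M) LinearMap.id)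

lemma mem_stableAnnihilator_iff {a : R} :
    a ∈ stableAnnihilator R M ↔ a • LinearMap.id ∈ freeFactorMaps R M M := Iff.rfl

section ShortExact

variable {K F Y : Type*} [AddCommGroup K] [AddCommGroup F] [AddCommGroup Y] [Module R K]
  [Module R F] [Module R Y] {i : K →ₗ[R] F} {p : F →ₗ[R] Y}

lemma exists_comp_eq_smul_id_of_mem_stableAnnihilator (hi : Function.Injective i)
    (hip : Function.Exact i p) (hp : Function.Surjective p) {a : R}
    (ha : a ∈ stableAnnihilator R Y) :
    ∃ τ : F →ₗ[R] K, τ ∘ₗ i = a • LinearMap.id ∧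
      a • LinearMap.id - i ∘ₗ τ ∈ freeFactorMaps R F F := by
  obtain ⟨σ, hσ, hpσ⟩ := exists_mem_freeFactorMaps_comp_eq hp (mem_stableAnnihilator_iff.1 ha)
  have hrange (y : F) : (a • LinearMap.id - σ ∘ₗ p : F →ₗ[R] F) y ∈ LinearMap.range i :=
    (hip _).1 <| by simpa [sub_eq_zero] using (LinearMap.congr_fun hpσ (p y)).symm
  let τ := LinearMap.codRestrictOfInjective _ i hi hrange
  have hτ : i ∘ₗ τ = a • LinearMap.id - σ ∘ₗ p := LinearMap.codRestrictOfInjective_comp ..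
  refine ⟨τ, LinearMap.ext fun k => hi ?_, ?_⟩
  · simpa [hip.apply_apply_eq_zero] using LinearMap.congr_fun hτ (i k)
  · rw [hτ, sub_sub_cancel]
    exact mem_freeFactorMaps_comp hσ p

lemma mem_stableAnnihilator_left_of_exact [Module.Finite R F] [Module.Free R F]
    (hi : Function.Injective i) (hip : Function.Exact i p) (hp : Function.Surjective p) {a : R}
    (ha : a ∈ stableAnnihilator R Y) : a ∈ stableAnnihilator R K := by
  obtain ⟨τ, hτ, -⟩ := exists_comp_eq_smul_id_of_mem_stableAnnihilator hi hip hp ha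
  rw [mem_stableAnnihilator_iff, ← hτ]
  exact mem_freeFactorMaps_comp (mem_freeFactorMaps_of_free τ) i

lemma mul_mem_stableAnnihilator_of_exact (hi : Function.Injective i) (hip : Function.Exact i p)
    (hp : Function.Surjective p) {a c : R} (ha : a ∈ stableAnnihilator R K)
    (hc : c ∈ stableAnnihilator R Y) : a * c ∈ stableAnnihilator R F := by
  obtain ⟨τ, -, hτ⟩ := exists_comp_eq_smul_id_of_mem_stableAnnihilator hi hip hp hc
  have hsplit : (a * c) • LinearMap.id =
      a • (c • LinearMap.id - i ∘ₗ τ) + i ∘ₗ (a • LinearMap.id) ∘ₗ τ := by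
    ext y
    simp [smul_sub, mul_smul]
  rw [mem_stableAnnihilator_iff, hsplit]
  exact add_mem (Submodule.smul_mem _ a hτ)
    (comp_mem_freeFactorMaps i (mem_freeFactorMaps_comp ha τ))

end ShortExact

/-- The stable annihilator of `Y` contains a power of the maximal ideal. For finite modules over
a Noetherian local ring this says that `Y` is locally free on the punctured spectrum. -/
def IsPuncturedFree (R Y : Type*) [CommRing R] [IsLocalRing R] [AddCommGroup Y]
    [Module R Y] : Prop :=
  ∃ n : ℕ, maximalIdeal R ^ n ≤ stableAnnihilator R Y

namespace IsPuncturedFree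

variable {K F Y : Type*} [IsLocalRing R] [AddCommGroup K] [AddCommGroup F] [AddCommGroup Y]
  [Module R K] [Module R F] [Module R Y] {i : K →ₗ[R] F} {p : F →ₗ[R] Y}

lemma of_le_radical [IsNoetherianRing R]
    (h : maximalIdeal R ≤ (stableAnnihilator R Y).radical) : IsPuncturedFree R Y :=
  Ideal.exists_pow_le_of_le_radical_of_fg h (maximalIdeal R).fg_of_isNoetherianRing

lemma left_of_exact [Module.Finite R F] [Module.Free R F] (hi : Function.Injective i)
    (hip : Function.Exact i p) (hp : Function.Surjective p) (h : IsPuncturedFree R Y) :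
    IsPuncturedFree R K :=
  h.imp fun _ hn _ ha => mem_stableAnnihilator_left_of_exact hi hip hp (hn ha)

lemma middle_of_exact (hi : Function.Injective i) (hip : Function.Exact i p)
    (hp : Function.Surjective p) (hK : IsPuncturedFree R K) (hY : IsPuncturedFree R Y) :
    IsPuncturedFree R F := by
  obtain ⟨n, hn⟩ := hK
  obtain ⟨m, hm⟩ := hY
  refine ⟨n + m, ?_⟩
  rw [pow_add, Ideal.mul_le]
  exact fun a ha c hc => mul_mem_stableAnnihilator_of_exact hi hip hp (hn ha) (hm hc)

end IsPuncturedFree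

end StableAnnihilator

section SMulPullback

variable {R : Type*} [CommRing R] {Y F : Type*} [AddCommGroup Y] [AddCommGroup F] [Module R Y]
  [Module R F]

/-- The pullback of `π : F → Y` along multiplication by `x` on `Y`. -/
abbrev smulPullback (x : R) (π : F →ₗ[R] Y) : Submodule R (Y × F) :=
  LinearMap.ker ((x • LinearMap.id).coprod (-π))

variable {x : R} {π : F →ₗ[R] Y}

namespace smulPullback

lemma mem_iff {z : Y × F} : z ∈ smulPullback x π ↔ x • z.1 = π z.2 := by
  simp [← sub_eq_add_neg, sub_eq_zero]

variable (x π) in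
/-- The inclusion of `ker π`, the kernel of the projection of the pullback to `Y`. -/
def ofKer : LinearMap.ker π →ₗ[R] smulPullback x π :=
  (LinearMap.inr R Y F ∘ₗ (LinearMap.ker π).subtype).codRestrict _ fun z => by simp

variable (x π) in
/-- The projection of the pullback to `Y`. -/
def toBase : smulPullback x π →ₗ[R] Y := LinearMap.fst R Y F ∘ₗ (smulPullback x π).subtype

lemma ofKer_injective : Function.Injective (ofKer x π) := fun _ _ h =>
  Subtype.ext (congrArg (fun z => z.1.2) h)

lemma toBase_surjective (hπ : Function.Surjective π) : Function.Surjective (toBase x π) := by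
  intro y
  obtain ⟨b, hb⟩ := hπ (x • y)
  exact ⟨⟨(y, b), mem_iff.2 hb.symm⟩, rfl⟩

lemma exact_ofKer_toBase : Function.Exact (ofKer x π) (toBase x π) := by
  rintro ⟨⟨y, b⟩, hyb⟩
  constructor
  · rintro (rfl : y = 0)
    exact ⟨⟨b, by simpa using hyb⟩, rfl⟩
  · rintro ⟨z, hz⟩
    exact (congrArg (fun w => w.1.1) hz).symm

lemma mem_stableAnnihilator [Module.Finite R F] [Module.Free R F] :
    x ∈ stableAnnihilator R (smulPullback x π) := by
  let σ : F →ₗ[R] smulPullback x π :=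
    (π.prod (x • LinearMap.id)).codRestrict _ fun b => by simp
  have hσ : σ ∘ₗ LinearMap.snd R Y F ∘ₗ (smulPullback x π).subtype = x • LinearMap.id := by
    ext z
    · exact (mem_iff.1 z.2).symm
    · rfl
  rw [mem_stableAnnihilator_iff, ← hσ]
  exact mem_freeFactorMaps_comp (mem_freeFactorMaps_of_free σ) _

end smulPullback

end SMulPullback

section PuncturedFree

variable {R : Type u} [CommRing R]

lemma subsingleton_ext_of_comp_eq_smul_id {A B C N : Type u} [AddCommGroup A] [AddCommGroup B]
    [AddCommGroup C] [AddCommGroup N] [Module R A] [Module R B] [Module R C] [Module R N]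
    {f : A →ₗ[R] B} {g : B →ₗ[R] C} (hf : Function.Injective f) (hfg : Function.Exact f g)
    (hg : Function.Surjective g) {s : C →ₗ[R] B} {r : B →ₗ[R] C} (hrs : r ∘ₗ s = LinearMap.id)
    {x : R} (hgs : g ∘ₗ s = x • LinearMap.id) (hx : x ∈ Module.annihilator R N) {i : ℕ}
    (hA : Subsingleton (Abelian.Ext (ModuleCat.of R N) (ModuleCat.of R A) i)) :
    Subsingleton (Abelian.Ext (ModuleCat.of R N) (ModuleCat.of R C) i) := by
  refine subsingleton_of_forall_eq 0 fun e => ?_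
  let b := e.comp (Abelian.Ext.mk₀ (ModuleCat.ofHom s)) (add_zero i)
  have hbg : b.comp (Abelian.Ext.mk₀ (ModuleCat.ofHom g)) (add_zero i) = 0 := by
    have hgs' : ModuleCat.ofHom s ≫ ModuleCat.ofHom g = x • 𝟙 (ModuleCat.of R C) :=
      ModuleCat.hom_ext hgs
    rw [Abelian.Ext.comp_assoc_of_third_deg_zero, Abelian.Ext.mk₀_comp_mk₀, hgs']
    exact congrArg (fun φ => φ.hom e)
      (Abelian.Ext.postcomp_smul_id_eq_zero_of_mem_annihilator (M := ModuleCat.of R C)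
        (N := ModuleCat.of R N) hx i)
  have hb : b = 0 := by
    obtain ⟨y, hy⟩ := Abelian.Ext.covariant_sequence_exact₂ _ (shortExact_of_exact hf hfg hg) b hbg
    rw [← hy, Subsingleton.elim y 0, Abelian.Ext.zero_comp]
  have hrs' : ModuleCat.ofHom s ≫ ModuleCat.ofHom r = 𝟙 (ModuleCat.of R C) :=
    ModuleCat.hom_ext hrs
  calc e = b.comp (Abelian.Ext.mk₀ (ModuleCat.ofHom r)) (add_zero i) := by
        rw [Abelian.Ext.comp_assoc_of_third_deg_zero, Abelian.Ext.mk₀_comp_mk₀, hrs',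
          Abelian.Ext.comp_mk₀_id]
    _ = 0 := by rw [hb, Abelian.Ext.zero_comp]

variable [IsLocalRing R] [IsNoetherianRing R]

lemma DepthGE.of_smulPullback {Y F : Type u} [AddCommGroup Y] [AddCommGroup F] [Module R Y]
    [Module R F] [Module.Finite R Y] [Module.Finite R F] {π : F →ₗ[R] Y}
    (hπ : Function.Surjective π) {x : R} (hx : x ∈ maximalIdeal R) {n : ℕ}
    (h : DepthGE R n (smulPullback x π)) : DepthGE R n Y := by
  rw [DepthGE.iff_subsingleton_ext] at h ⊢
  have hg : Function.Surjective ((x • LinearMap.id : Y →ₗ[R] Y).coprod (-π)) := fun y => by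
    obtain ⟨b, hb⟩ := hπ (-y)
    exact ⟨(0, b), by simp [hb]⟩
  have hx' : x ∈ Module.annihilator R (ResidueField R) := by
    simpa [Module.mem_annihilator, Algebra.smul_def, residue_eq_zero_iff] using fun _ => Or.inl hx
  exact fun i hi => subsingleton_ext_of_comp_eq_smul_id (s := LinearMap.inl R Y F)
    (r := LinearMap.fst R Y F) Subtype.val_injective (LinearMap.exact_subtype_ker_map _) hg
    (LinearMap.fst_comp_inl ..) (LinearMap.coprod_inl ..) hx' (h i hi)

lemma IsResolving.exists_mem_forall_mem_radical_stableAnnihilator {𝒳 : Set (ModuleCat.{u} R)}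
    (h𝒳 : IsResolving R 𝒳) (s : Finset R) (hs : ∀ x ∈ s, x ∈ maximalIdeal R) {M : ModuleCat.{u} R}
    (hM : M ∈ 𝒳) :
    ∃ Y ∈ 𝒳, (∀ x ∈ s, x ∈ (stableAnnihilator R Y).radical) ∧
      ∀ n, DepthGE R n Y → DepthGE R n M := by
  classical
  induction s using Finset.induction_on with
  | empty => exact ⟨M, hM, by simp, fun _ => id⟩
  | insert x s _ ih =>
    rw [Finset.forall_mem_insert] at hs
    obtain ⟨Y, hY, hrad, hdepth⟩ := ih hs.2
    have := h𝒳.finite Y hY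
    obtain ⟨k, π, hπ⟩ := Module.Finite.exists_fin' R Y
    have hK := h𝒳.ker_mem hπ (h𝒳.mem_of_free (Fin k → R)) hY
    have hW := h𝒳.mem_of_exact (smulPullback.ofKer_injective (x := x) (π := π))
      smulPullback.exact_ofKer_toBase (smulPullback.toBase_surjective hπ) hK hY
    refine ⟨.of R (smulPullback x π), hW, Finset.forall_mem_insert _ _ _ |>.2 ⟨?_, ?_⟩,
      fun n hn => hdepth n (.of_smulPullback hπ hs.1 hn)⟩
    · exact Ideal.le_radical smulPullback.mem_stableAnnihilator
    · intro y hy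
      obtain ⟨n, hn⟩ := hrad y hy
      have hn' := mem_stableAnnihilator_left_of_exact (LinearMap.ker π).subtype_injective
        π.exact_subtype_ker_map hπ hn
      exact ⟨n + n, pow_add y n n ▸ mul_mem_stableAnnihilator_of_exact
        smulPullback.ofKer_injective smulPullback.exact_ofKer_toBase
        (smulPullback.toBase_surjective hπ) hn' hn⟩

lemma IsResolving.exists_isPuncturedFree {𝒳 : Set (ModuleCat.{u} R)} (h𝒳 : IsResolving R 𝒳)
    {M : ModuleCat.{u} R} (hM : M ∈ 𝒳) :
    ∃ Y ∈ 𝒳, IsPuncturedFree R Y ∧ ∀ n, DepthGE R n Y → DepthGE R n M := by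
  obtain ⟨s, hs⟩ := (maximalIdeal R).fg_of_isNoetherianRing
  obtain ⟨Y, hY, hrad, hdepth⟩ := h𝒳.exists_mem_forall_mem_radical_stableAnnihilator s
    (fun x hx => hs ▸ Ideal.subset_span hx) hM
  refine ⟨Y, hY, .of_le_radical ?_, hdepth⟩
  rw [← hs, Ideal.span_le]
  exact hrad

end PuncturedFree

/-! ### Descent of extensions -/

section Descent

open TensorProduct

section General

variable {R S : Type*} [CommRing R] [CommRing S] [Algebra R S]

lemma exists_comp_baseChange_eq_smul {K F Y B : Type*} [AddCommGroup K] [AddCommGroup F]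
    [AddCommGroup Y] [AddCommGroup B] [Module R K] [Module R F] [Module R Y] [Module R B]
    {i : K →ₗ[R] F} {p : F →ₗ[R] Y} (hi : Function.Injective i) (hip : Function.Exact i p)
    (hp : Function.Surjective p) (h : K →ₗ[R] B) {t : S}
    (ht : t ∈ (stableAnnihilator R Y).map (algebraMap R S)) :
    ∃ ρ : S ⊗[R] F →ₗ[S] S ⊗[R] B, ρ ∘ₗ i.baseChange S = t • h.baseChange S := by
  suffices hle : (stableAnnihilator R Y).map (algebraMap R S) ≤
      (LinearMap.range ((i.baseChange S).lcomp S (S ⊗[R] B))).comap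
        (LinearMap.toSpanSingleton S _ (h.baseChange S)) from hle ht
  refine Ideal.map_le_iff_le_comap.2 fun a ha => ?_
  obtain ⟨τ, hτ, -⟩ := exists_comp_eq_smul_id_of_mem_stableAnnihilator hi hip hp ha
  refine ⟨(h ∘ₗ τ).baseChange S, ?_⟩
  calc (h ∘ₗ τ).baseChange S ∘ₗ i.baseChange S = (a • h).baseChange S := by
        rw [← LinearMap.baseChange_comp, LinearMap.comp_assoc, hτ, LinearMap.comp_smul,
          LinearMap.comp_id]
    _ = algebraMap R S a • h.baseChange S := by rw [LinearMap.baseChange_smul, algebraMap_smul]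

lemma bijective_of_exact_of_comp_eq {A B C E : Type*} [AddCommGroup A] [AddCommGroup B]
    [AddCommGroup C] [AddCommGroup E] [Module S A] [Module S B] [Module S C] [Module S E]
    {f : A →ₗ[S] B} {g : B →ₗ[S] C} {α : A →ₗ[S] E} {β : E →ₗ[S] C}
    (hfg : Function.Exact f g) (hg : Function.Surjective g) (hα : Function.Injective α)
    (hαβ : Function.Exact α β) {Ψ : B →ₗ[S] E} (hΨf : Ψ ∘ₗ f = α) (hβΨ : β ∘ₗ Ψ = g) :
    Function.Bijective Ψ := by
  constructor
  · rw [injective_iff_map_eq_zero]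
    intro b hb
    obtain ⟨a, rfl⟩ := (hfg b).1 (by rw [← hβΨ, LinearMap.comp_apply, hb, map_zero])
    rw [(injective_iff_map_eq_zero α).1 hα a (by rw [← hΨf, LinearMap.comp_apply, hb]), map_zero]
  · intro e
    obtain ⟨b, hb⟩ := hg (β e)
    rw [← hβΨ, LinearMap.comp_apply] at hb
    obtain ⟨a, ha⟩ := (hαβ (e - Ψ b)).1 (by rw [map_sub, hb, sub_self])
    exact ⟨f a + b, by rw [map_add, ← LinearMap.comp_apply, hΨf, ha, sub_add_cancel]⟩

namespace ModulePushout

variable {K F X E : Type*} [AddCommGroup K] [AddCommGroup F] [AddCommGroup X] [AddCommGroup E]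
  [Module R K] [Module R F] [Module R X] [Module R E] [Module S E] [IsScalarTower R S E]
  {i : K →ₗ[R] F} {h : K →ₗ[R] X}

/-- The map out of the base change of a pushout given by a commutative square of base changes. -/
def descBaseChange (a : S ⊗[R] X →ₗ[S] E) (b : S ⊗[R] F →ₗ[S] E)
    (hab : b ∘ₗ i.baseChange S = a ∘ₗ h.baseChange S) : S ⊗[R] ModulePushout i h →ₗ[S] E :=
  (desc (a.restrictScalars R ∘ₗ TensorProduct.mk R S X 1)
    (b.restrictScalars R ∘ₗ TensorProduct.mk R S F 1)
    (LinearMap.ext fun k => LinearMap.congr_fun hab (1 ⊗ₜ k))).liftBaseChange S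

variable {a : S ⊗[R] X →ₗ[S] E} {b : S ⊗[R] F →ₗ[S] E}
  {hab : b ∘ₗ i.baseChange S = a ∘ₗ h.baseChange S}

lemma descBaseChange_comp_inl : descBaseChange a b hab ∘ₗ (inl i h).baseChange S = a := by
  apply AlgebraTensorModule.curry_injective
  ext x
  simp [descBaseChange]

lemma comp_descBaseChange {G : Type*} [AddCommGroup G] [Module R G] {q : F →ₗ[R] G}
    (hq : q ∘ₗ i = (0 : X →ₗ[R] G) ∘ₗ h) {β : E →ₗ[S] S ⊗[R] G} (hβa : β ∘ₗ a = 0)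
    (hβb : β ∘ₗ b = q.baseChange S) :
    β ∘ₗ descBaseChange a b hab = (desc 0 q hq).baseChange S := by
  refine AlgebraTensorModule.ext fun s w => ?_
  obtain ⟨x, y, rfl⟩ := exists_eq_inl_add_inr i h w
  have hx := LinearMap.congr_fun hβa (1 ⊗ₜ x)
  have hy := LinearMap.congr_fun hβb (1 ⊗ₜ y)
  simp only [LinearMap.comp_apply, LinearMap.zero_apply, LinearMap.baseChange_tmul] at hx hy
  simp [descBaseChange, hx, hy, smul_tmul']

end ModulePushout

end General

variable {R S : Type u} [CommRing R] [CommRing S] [Algebra R S] [IsLocalRing R] [IsLocalRing S]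
  [IsNoetherianRing R] {A B : Type u} [AddCommGroup A] [AddCommGroup B] [Module R A] [Module R B]

namespace IsCompletionLike

-- By density, `g` agrees with some `h ⊗ S` modulo `𝔪ⁿ Hom(S ⊗ K, S ⊗ B)`, and maps in that
-- submodule extend to `S ⊗ F` since `𝔪ⁿ` annihilates `Ext¹(A, B)`.
lemma exists_baseChange_add_comp_baseChange_eq (hS : IsCompletionLike R S)
    (hA : IsPuncturedFree R A) {K F : Type u} [AddCommGroup K] [AddCommGroup F] [Module R K]
    [Module R F] [Module.Finite R K] {i : K →ₗ[R] F} {p : F →ₗ[R] A} (hi : Function.Injective i)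
    (hip : Function.Exact i p) (hp : Function.Surjective p) (g : S ⊗[R] K →ₗ[S] S ⊗[R] B) :
    ∃ (h : K →ₗ[R] B) (ρ : S ⊗[R] F →ₗ[S] S ⊗[R] B),
      h.baseChange S + ρ ∘ₗ i.baseChange S = g := by
  obtain ⟨n, hn⟩ := hA
  have := hS.flat
  have := Module.finitePresentation_of_finite R K
  induction g using (Module.FinitePresentation.isBaseChange_map R K B S).inductionOn with
  | zero => exact ⟨0, 0, by simp⟩
  | tmul h => exact ⟨h, 0, by simp⟩
  | add g₁ g₂ hg₁ hg₂ =>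
    obtain ⟨h₁, ρ₁, rfl⟩ := hg₁
    obtain ⟨h₂, ρ₂, rfl⟩ := hg₂
    refine ⟨h₁ + h₂, ρ₁ + ρ₂, ?_⟩
    rw [LinearMap.baseChange_add, LinearMap.add_comp]
    abel
  | smul s g hg =>
    obtain ⟨h, ρ, rfl⟩ := hg
    obtain ⟨r, hr⟩ := hS.exists_sub_mem n s
    obtain ⟨ρ', hρ'⟩ := exists_comp_baseChange_eq_smul hi hip hp h (Ideal.map_mono hn hr)
    refine ⟨r • h, s • ρ + ρ', ?_⟩
    rw [LinearMap.add_comp, hρ', LinearMap.baseChange_smul, LinearMap.smul_comp]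
    refine LinearMap.ext fun z => ?_
    simp only [LinearMap.add_apply, LinearMap.smul_apply, sub_smul, algebraMap_smul, smul_add]
    abel

variable {E : Type u} [AddCommGroup E] [Module S E]
  {α : S ⊗[R] B →ₗ[S] E} {β : E →ₗ[S] S ⊗[R] A}

lemma exists_comp_baseChange_eq_comp_baseChange (hS : IsCompletionLike R S)
    (hA : IsPuncturedFree R A) (hα : Function.Injective α) (hαβ : Function.Exact α β)
    (hβ : Function.Surjective β) {k : ℕ} {π : (Fin k → R) →ₗ[R] A} (hπ : Function.Surjective π) :
    ∃ (h : LinearMap.ker π →ₗ[R] B) (l : S ⊗[R] (Fin k → R) →ₗ[S] E),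
      β ∘ₗ l = π.baseChange S ∧
        l ∘ₗ (LinearMap.ker π).subtype.baseChange S = α ∘ₗ h.baseChange S := by
  set ι := (LinearMap.ker π).subtype
  have hιπ : Function.Exact ι π := π.exact_subtype_ker_map
  obtain ⟨l, hl⟩ := Module.projective_lifting_property β (π.baseChange S) hβ
  have hrange (x) : (l ∘ₗ ι.baseChange S) x ∈ LinearMap.range α := (hαβ _).1 <| by
    rw [LinearMap.comp_apply, ← LinearMap.comp_apply, hl]
    exact (baseChange_exact S hιπ hπ).apply_apply_eq_zero x
  obtain ⟨h, ρ, hhρ⟩ := hS.exists_baseChange_add_comp_baseChange_eq hA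
    (LinearMap.ker π).subtype_injective hιπ hπ
    (LinearMap.codRestrictOfInjective (l ∘ₗ ι.baseChange S) α hα hrange)
  have hαh : α ∘ₗ (h.baseChange S + ρ ∘ₗ ι.baseChange S) = l ∘ₗ ι.baseChange S := by
    rw [hhρ, LinearMap.codRestrictOfInjective_comp]
  refine ⟨h, l - α ∘ₗ ρ, ?_, ?_⟩
  · rw [← hl]
    exact LinearMap.ext fun x => by simp [hαβ.apply_apply_eq_zero]
  · rw [LinearMap.sub_comp, ← hαh, LinearMap.comp_add, LinearMap.comp_assoc, add_sub_cancel_right]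

lemma exists_exact_equiv_baseChange [Module.Finite R A] (hS : IsCompletionLike R S)
    (hA : IsPuncturedFree R A) (hα : Function.Injective α) (hαβ : Function.Exact α β)
    (hβ : Function.Surjective β) :
    ∃ (P : ModuleCat.{u} R) (j : B →ₗ[R] P) (p : P →ₗ[R] A), Function.Injective j ∧
      Function.Exact j p ∧ Function.Surjective p ∧ Nonempty (S ⊗[R] P ≃ₗ[S] E) := by
  obtain ⟨k, π, hπ⟩ := Module.Finite.exists_fin' R A
  obtain ⟨h, l, hβl, hl⟩ := hS.exists_comp_baseChange_eq_comp_baseChange hA hα hαβ hβ hπ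
  let _ : Module R E := Module.compHom E (algebraMap R S)
  have : IsScalarTower R S E := .of_algebraMap_smul fun _ _ => rfl
  have hιπ := π.exact_subtype_ker_map
  have hq : π ∘ₗ (LinearMap.ker π).subtype = (0 : B →ₗ[R] A) ∘ₗ h := by
    rw [hιπ.linearMap_comp_eq_zero, LinearMap.zero_comp]
  have hexact := ModulePushout.exact_inl_desc hq hιπ
  have hsurj := ModulePushout.desc_surjective hq hπ
  exact ⟨.of R (ModulePushout (LinearMap.ker π).subtype h), ModulePushout.inl _ h,
    ModulePushout.desc 0 π hq,
    ModulePushout.inl_injective (LinearMap.ker π).subtype_injective, hexact, hsurj,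
    ⟨.ofBijective (ModulePushout.descBaseChange α l hl) <| bijective_of_exact_of_comp_eq
      (baseChange_exact S hexact hsurj) (baseChange_surjective S hsurj) hα hαβ
      ModulePushout.descBaseChange_comp_inl
      (ModulePushout.comp_descBaseChange hq hαβ.linearMap_comp_eq_zero hβl)⟩⟩

end IsCompletionLike

end Descent

/-! ### Resolving subcategories over complete intersections -/

section CompleteIntersection

open scoped Pointwise TensorProduct

variable {R : Type u} [CommRing R] [IsLocalRing R] {S : Type u} [CommRing S] [IsLocalRing S]
  [Algebra R S] {𝒳 : Set (ModuleCat.{u} R)} {n : ℕ}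

variable (S) in
/-- The class of base changes to `S` of the members of `𝒳` that are free on the punctured
spectrum; over the whole of `𝒳`, extensions of base changes need not descend to `R`. -/
def completedClass (𝒳 : Set (ModuleCat.{u} R)) : Set (ModuleCat.{u} S) :=
  {Z | ∃ X ∈ 𝒳, IsPuncturedFree R X ∧ Nonempty (S ⊗[R] X ≃ₗ[S] Z)}

lemma exists_ker_mem_completedClass (hS : IsCompletionLike R S) (h𝒳 : IsResolving R 𝒳)
    {Z : ModuleCat.{u} S} (hZ : Z ∈ completedClass S 𝒳) :
    ∃ (k : ℕ) (π : (Fin k → S) →ₗ[S] Z), Function.Surjective π ∧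
      ModuleCat.of S (LinearMap.ker π) ∈ completedClass S 𝒳 := by
  obtain ⟨X, hX, hfree, ⟨e⟩⟩ := hZ
  have := hS.flat
  have := h𝒳.finite X hX
  obtain ⟨k, π, hπ⟩ := Module.Finite.exists_fin' R X
  let ι := (LinearMap.ker π).subtype
  have hι : Function.Injective ι := (LinearMap.ker π).subtype_injective
  have hιπ : Function.Exact ι π := π.exact_subtype_ker_map
  let E : S ⊗[R] (Fin k → R) ≃ₗ[S] (Fin k → S) := TensorProduct.piScalarRight R S S (Fin k)
  let t := E.toLinearMap ∘ₗ ι.baseChange S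
  let π' := e.toLinearMap ∘ₗ π.baseChange S ∘ₗ E.symm.toLinearMap
  have ht : Function.Exact t (π.baseChange S ∘ₗ E.symm.toLinearMap) :=
    (E.conj_exact_iff_exact _ _).2 (baseChange_exact S hιπ hπ)
  have hexact : Function.Exact t π' := e.postcomp_exact_iff_exact.2 ht
  exact ⟨k, π', e.surjective.comp ((baseChange_surjective S hπ).comp E.symm.surjective),
    .of R (LinearMap.ker π), h𝒳.ker_mem hπ (h𝒳.mem_of_free _) hX, hfree.left_of_exact hι hιπ hπ,
    ⟨(LinearEquiv.ofInjective t (E.injective.comp (baseChange_injective S hι))).trans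
      (.ofEq _ _ hexact.linearMap_ker_eq.symm)⟩⟩

variable [IsNoetherianRing R]

lemma isPreresolving_completedClass (hS : IsCompletionLike R S) (h𝒳 : IsResolving R 𝒳) :
    IsPreresolving S (completedClass S 𝒳) where
  finite := by
    rintro Z ⟨X, hX, -, ⟨e⟩⟩
    have := h𝒳.finite X hX
    exact .equiv e
  isoClosed := fun ⟨X, hX, hfree, ⟨e⟩⟩ e' => ⟨X, hX, hfree, ⟨e.trans e'⟩⟩
  extClosed := by
    rintro Z₁ E Z₂ f g hf hfg hg ⟨B, hB, hBfree, ⟨eB⟩⟩ ⟨A, hA, hAfree, ⟨eA⟩⟩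
    have := h𝒳.finite A hA
    obtain ⟨P, j, p, hj, hjp, hp, e⟩ := hS.exists_exact_equiv_baseChange hAfree
      (α := f ∘ₗ eB.toLinearMap) (β := eA.symm.toLinearMap ∘ₗ g) (hf.comp eB.injective)
      (eB.precomp_exact_iff_exact.2 (eA.symm.postcomp_exact_iff_exact.2 hfg))
      (eA.symm.surjective.comp hg)
    exact ⟨P, h𝒳.mem_of_exact hj hjp hp hB hA, .middle_of_exact hj hjp hp hBfree hAfree, e⟩
  exists_ker_mem _ hZ := exists_ker_mem_completedClass hS h𝒳 hZ

namespace IsCompletionLike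

lemma depthGE_self (hS : IsCompletionLike R S) (hCI : IsCILike S n) : DepthGE R n R := by
  have := hS.flat
  have := hS.isLocalHom
  have := hCI.isNoetherianRing
  exact .of_baseChange hS.map_maximalIdeal
    (hCI.depthGE_self.of_linearEquiv (TensorProduct.AlgebraTensorModule.rid R S S).symm)

lemma ringKrullDim_eq (hS : IsCompletionLike R S) (hCI : IsCILike S n) : ringKrullDim R = n :=
  have := hCI.isNoetherianRing
  le_antisymm (hS.ringKrullDim_le.trans_eq hCI.ringKrullDim_eq)
    (hS.depthGE_self hCI).natCast_le_ringKrullDim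

lemma subsingleton_ext_one (hS : IsCompletionLike R S) (hCI : IsCILike S n) {W : Type u}
    [AddCommGroup W] [Module R W] [Module.Finite R W] (hW : DepthGE R n W) :
    Subsingleton (Abelian.Ext (ModuleCat.of R W) (ModuleCat.of R R) 1) := by
  have := hS.flat
  have := hS.isLocalHom
  let e : ModuleCat.of S (S ⊗[R] R) ≅ ModuleCat.of S S :=
    (TensorProduct.AlgebraTensorModule.rid R S S).toModuleIso
  have : Subsingleton ((Abelian.extFunctorObj (ModuleCat.of S (S ⊗[R] W)) 1).obj (.of S S)) :=
    hCI.subsingleton_ext_one (S ⊗[R] W) hW.baseChange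
  exact subsingleton_ext_one_of_baseChange (S := S)
    ((Abelian.extFunctorObj _ 1).mapIso e).addCommGroupIsoToAddEquiv.toEquiv.subsingleton

lemma depthGE_of_mem (hS : IsCompletionLike R S) (hCI : IsCILike S n) (h𝒳 : IsResolving R 𝒳)
    (hpd : ∀ M ∈ 𝒳, ∀ m, HasProjectiveDimensionLE M m → Module.Free R M) {M : ModuleCat.{u} R}
    (hM : M ∈ 𝒳) : DepthGE R n M := by
  have := hS.flat
  have := hS.isLocalHom
  have := hCI.isNoetherianRing
  have hfree (Z) (hZ : Z ∈ completedClass S 𝒳) (m) (hm : HasProjectiveDimensionLE Z m) :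
      Module.Free S Z := by
    obtain ⟨X, hX, -, ⟨e⟩⟩ := hZ
    have := h𝒳.finite X hX
    have := hpd X hX m (hasProjectiveDimensionLE_of_baseChange (S := S)
      (hasProjectiveDimensionLT_of_iso e.toModuleIso.symm _))
    exact .of_equiv e
  obtain ⟨Y, hY, hYfree, hYM⟩ := h𝒳.exists_isPuncturedFree hM
  have := h𝒳.finite Y hY
  exact hYM n <| .of_baseChange hS.map_maximalIdeal <| hCI.depthGE_of_mem
    (isPreresolving_completedClass hS h𝒳) hfree (.of S (S ⊗[R] Y)) ⟨Y, hY, hYfree, ⟨.refl _ _⟩⟩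

lemma not_contravariantlyInfinite (hS : IsCompletionLike R S) (hCI : IsCILike S (n + 1))
    (h𝒳 : IsResolving R 𝒳) (hdepth : ∀ M ∈ 𝒳, DepthGE R (n + 1) M) :
    ¬ ContravariantlyInfinite R 𝒳 := by
  obtain ⟨x, hx, hreg, -⟩ := DepthGE.succ_iff.1 (hS.depthGE_self hCI)
  refine h𝒳.not_contravariantlyInfinite hreg (fun hmem => ?_) fun W hW => ?_
  · have hlt := ((DepthGE.quotSMulTop_iff hx hreg).1 (hdepth _ hmem)).natCast_le_ringKrullDim
    rw [hS.ringKrullDim_eq hCI, Nat.cast_le] at hlt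
    lia
  · have := h𝒳.finite W hW
    exact hS.subsingleton_ext_one hCI (hdepth W hW)

end IsCompletionLike

end CompleteIntersection

theorem stmt0_general (R : Type u) [CommRing R] [IsNoetherianRing R] [IsLocalRing R]
    (hci : IsCompleteIntersection R) (hdim : 0 < ringKrullDim R)
    (𝒳 : Set (ModuleCat.{u} R)) (h𝒳 : IsResolving R 𝒳) :
    (¬ ContravariantlyInfinite R 𝒳 ↔
      ¬ ∃ M ∈ 𝒳, (∃ n : ℕ, ProjDimLE R M n) ∧ ¬ ProjDimLE R M 0) ∧
    (¬ ContravariantlyInfinite R 𝒳 ↔ ∀ M ∈ 𝒳, IsMCM R M) := by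
  obtain ⟨S, _, _, _, n, hS, hCI⟩ := hci.exists_isCompletionLike_isCILike
  have hn := hS.ringKrullDim_eq hCI
  have hMCM (M) (hM : M ∈ 𝒳) : IsMCM R M ↔ DepthGE R n M :=
    have := h𝒳.finite M hM
    isMCM_iff_depthGE hn
  have h12 (hinf : ¬ ContravariantlyInfinite R 𝒳) (M) (hM : M ∈ 𝒳) (m)
      (hm : HasProjectiveDimensionLE M m) : Module.Free R M := by
    by_contra hfree
    exact hinf (h𝒳.contravariantlyInfinite_of_hasProjectiveDimensionLE hM hm hfree)
  have h31 (hdepth : ∀ M ∈ 𝒳, DepthGE R n M) : ¬ ContravariantlyInfinite R 𝒳 := by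
    obtain ⟨n, rfl⟩ := Nat.exists_eq_succ_of_ne_zero (n := n) (by rintro rfl; simp [hn] at hdim)
    exact hS.not_contravariantlyInfinite hCI h𝒳 hdepth
  rw [h𝒳.not_exists_projDimLE_iff, forall₂_congr hMCM]
  exact ⟨⟨h12, fun hpd => h31 fun _ => hS.depthGE_of_mem hCI h𝒳 hpd⟩,
    fun hinf _ => hS.depthGE_of_mem hCI h𝒳 (h12 hinf), h31⟩

/-- Over a henselian local complete intersection of positive dimension,
a resolving subcategory `𝒳` is not contravariantly infinite iff it contains no module of
finite positive projective dimension, iff all its members are maximal Cohen–Macaulay. -/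
theorem stmt0 (R : Type u) [CommRing R] [IsNoetherianRing R] [IsLocalRing R]
    [HenselianLocalRing R] (hci : IsCompleteIntersection R) (hdim : 0 < ringKrullDim R)
    (𝒳 : Set (ModuleCat.{u} R)) (h𝒳 : IsResolving R 𝒳) :
    (¬ ContravariantlyInfinite R 𝒳 ↔
      ¬ ∃ M ∈ 𝒳, (∃ n : ℕ, ProjDimLE R M n) ∧ ¬ ProjDimLE R M 0) ∧
    (¬ ContravariantlyInfinite R 𝒳 ↔ ∀ M ∈ 𝒳, IsMCM R M) :=
  stmt0_general R hci hdim 𝒳 h𝒳
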